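/- arXiv:2208.12174 — 2 statements merged into one kernel-verified Lean document; each statement's English description precedes it below -/
import Mathlib

section
/- There exists a measurable map T : [0,1] → [0,1], bijective up to Lebesgue-null sets with measurable inverse and preserving one-dimensional Lebesgue measure, which is weakly mixing but not strongly mixing: for all Borel sets A, B ⊆ [0,1], (1/n) ∑_{j=0}^{n−1} [|T^{−j}(A) ∩ B| − |A||B|]² → 0 as n → ∞, yet there exist Borel sets A, B ⊆ [0,1] for which |T^{−n}(A) ∩ B| does not converge to |A||B|. -/
/-!
The witness is, up to rescaling, not Chacon's map but the tower of height two over an irrational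
rotation `R` of `[0, 1)` by `α`, whose second floor stands above `[0, 1/2)`; it lives on `[0, 3/2)`.

The tower map `T` (`towerMap`) is ergodic because its first return to the base is `R`. The number
`α` is chosen with rational approximations `p / q`, `q = 2m + 1` odd, such that `q |q α - p|` tends
to `0`. By Hermite's identity an orbit of length `q` of the rotation by `p / q` visits `[0, 1/2)`
either `m` or `m + 1` times, depending on whether the fractional part of `q x` is at least `1/2` or
not, and off a small neighbourhood of the grid `ℤ / (2q)` the same is true of `R`. Hence
`T ^ (q + m + 1)` is close to the identity on one of these two sets of points and close to `T` on
the other. Both sets equidistribute, so for the Koopman operator `U` of `T` the powers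
`U ^ (q + m + 1)` converge weakly to `(1 + U) / 2` (`tendsto_towerMap_iterate`).

For an ergodic map this weak limit implies weak mixing (`cesaro_sq_tendsto_zero`,
`weakly_mixing_of_weak_limit`): a vector of the tensor square fixed by `U ⊗ U` is fixed by the weak
limit `(1 + U ⊗ 1 + 1 ⊗ U + U ⊗ U) / 4`, by strict convexity it is then fixed by `U ⊗ 1`, and
ergodicity makes it orthogonal to `x ⊗ x` for `x` of mean zero. The same weak limit excludes strong
mixing: along the exponents `q + m + 1` the measure of `T ^ (-n) A ∩ A` has a limit which is at
least half the measure of `A`, too large if the measure of `A` is below `1/2`.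
-/

open MeasureTheory Filter Set
open scoped ENNReal
open scoped RealInnerProductSpace TensorProduct Topology

/-! ### Weak limits of powers of isometries -/

/-- Pointwise convergence of an equibounded sequence of functionals may be tested on a set with
dense span. -/
lemma tendsto_of_dense_span {H : Type*} [NormedAddCommGroup H] [NormedSpace ℝ H]
    (φ : ℕ → H →L[ℝ] ℝ) (ψ : H →L[ℝ] ℝ) (C : ℝ) (hφ : ∀ n x, |φ n x| ≤ C * ‖x‖)
    (D : Set H) (hD : Dense (Submodule.span ℝ D : Set H))
    (h : ∀ x ∈ D, Tendsto (fun n => φ n x) atTop (𝓝 (ψ x))) (x : H) :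
    Tendsto (fun n => φ n x) atTop (𝓝 (ψ x)) := by
  have hspan : ∀ s ∈ Submodule.span ℝ D, Tendsto (fun n => φ n s) atTop (𝓝 (ψ s)) := by
    intro s hs
    induction hs using Submodule.span_induction with
    | mem x hx => exact h x hx
    | zero => simp
    | add x y _ _ hx hy => simpa using hx.add hy
    | smul a x _ hx => simpa using hx.const_mul a
  rw [Metric.tendsto_atTop]
  intro ε hε
  have hM : 0 < |C| + ‖ψ‖ + 1 := by positivity
  obtain ⟨s, hs, hxs⟩ := Metric.mem_closure_iff.1 (hD x) (ε / (2 * (|C| + ‖ψ‖ + 1))) (by positivity)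
  obtain ⟨N, hN⟩ := Metric.tendsto_atTop.1 (hspan s hs) (ε / 2) (by positivity)
  refine ⟨N, fun n hn => ?_⟩
  have h1 := hN n hn
  rw [Real.dist_eq] at h1 ⊢
  rw [dist_eq_norm, lt_div_iff₀ (by positivity)] at hxs
  have h2 : |φ n (x - s)| ≤ |C| * ‖x - s‖ :=
    (hφ n _).trans (mul_le_mul_of_nonneg_right (le_abs_self C) (norm_nonneg _))
  have h3 : |ψ (x - s)| ≤ ‖ψ‖ * ‖x - s‖ := ψ.le_opNorm _
  have h4 : φ n x - ψ x = φ n (x - s) + (φ n s - ψ s) - ψ (x - s) := by simp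
  rw [h4]
  have h5 := abs_sub (φ n (x - s) + (φ n s - ψ s)) (ψ (x - s))
  have h6 := abs_add_le (φ n (x - s)) (φ n s - ψ s)
  nlinarith [norm_nonneg (x - s)]

/-- Weak convergence of a sequence of contractions may be tested on a set with dense span. -/
lemma weak_tendsto_of_dense_span {H : Type*} [NormedAddCommGroup H] [InnerProductSpace ℝ H]
    (V : ℕ → H →L[ℝ] H) (hV : ∀ n x, ‖V n x‖ ≤ ‖x‖) (Q : H →L[ℝ] H)
    (D : Set H) (hD : Dense (Submodule.span ℝ D : Set H))
    (h : ∀ x ∈ D, ∀ y ∈ D, Tendsto (fun n => ⟪V n x, y⟫) atTop (𝓝 ⟪Q x, y⟫)) (x y : H) :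
    Tendsto (fun n => ⟪V n x, y⟫) atTop (𝓝 ⟪Q x, y⟫) := by
  have key : ∀ y ∈ D, ∀ x, Tendsto (fun n => ⟪V n x, y⟫) atTop (𝓝 ⟪Q x, y⟫) := by
    intro y hy x
    have := tendsto_of_dense_span (fun n => (innerSL ℝ y).comp (V n)) ((innerSL ℝ y).comp Q) ‖y‖
      (fun n x => ?_) D hD (fun x hx => ?_) x
    · simpa [real_inner_comm] using this
    · simpa using (abs_real_inner_le_norm y (V n x)).trans
        (mul_le_mul_of_nonneg_left (hV n x) (norm_nonneg _))
    · simpa [real_inner_comm] using h x hx y hy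
  have := tendsto_of_dense_span (fun n => innerSL ℝ (V n x)) (innerSL ℝ (Q x)) ‖x‖
      (fun n y => ?_) D hD (fun y hy => ?_) y
  · simpa using this
  · simpa using (abs_real_inner_le_norm (V n x) y).trans
        (mul_le_mul_of_nonneg_right (hV n x) (norm_nonneg _))
  · simpa using key y hy x

lemma exists_completion_isometry {E : Type*} [NormedAddCommGroup E] [InnerProductSpace ℝ E]
    (V : E →ₗᵢ[ℝ] E) : ∃ W : UniformSpace.Completion E →L[ℝ] UniformSpace.Completion E,
      (∀ x : E, W x = V x) ∧ ∀ x, ‖W x‖ = ‖x‖ := by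
  let e : E →L[ℝ] UniformSpace.Completion E := UniformSpace.Completion.toComplL
  let W := (e.comp V.toContinuousLinearMap).extend e
  have hW : ∀ x : E, W x = V x := fun x =>
    ContinuousLinearMap.extend_eq _ UniformSpace.Completion.denseRange_coe
      (UniformSpace.Completion.isUniformInducing_coe E) x
  refine ⟨W, hW, fun x => ?_⟩
  induction x using UniformSpace.Completion.induction_on with
  | hp => exact isClosed_eq (by fun_prop) (by fun_prop)
  | ih a => rw [hW]; simp

/-- If `U ^ (h n)` converges weakly to `(1 + U) / 2` and the averages of `U ^ j x` tend to `0`, then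
so do the averages of `⟪U ^ j x, y⟫ ^ 2`. On the completed tensor square these are the averages of
`⟪(U ⊗ U) ^ j (x ⊗ x), y ⊗ y⟫`, so by the mean ergodic theorem it suffices that the projection `F`
of `x ⊗ x` to the fixed vectors of `U ⊗ U` vanishes. The weak limit of `(U ⊗ U) ^ (h n)` is
`(1 + U ⊗ 1 + 1 ⊗ U + U ⊗ U) / 4`; as it fixes `F`, strict convexity of the ball gives
`(U ⊗ 1) F = F`, so `⟪F, x ⊗ x⟫` equals the limit of `⟪F, (averages of U ^ j x) ⊗ x⟫`, which
is `0`. -/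
theorem cesaro_sq_tendsto_zero {H : Type*} [NormedAddCommGroup H] [InnerProductSpace ℝ H]
    [CompleteSpace H] (U : H →ₗᵢ[ℝ] H) (h : ℕ → ℕ)
    (hU : ∀ x y, Tendsto (fun n => ⟪U^[h n] x, y⟫) atTop (𝓝 ((⟪x, y⟫ + ⟪U x, y⟫) / 2)))
    (x : H) (hx : Tendsto (fun N => birkhoffAverage ℝ U _root_.id N x) atTop (𝓝 0)) (y : H) :
    Tendsto (fun N : ℕ => (1 / N : ℝ) * ∑ j ∈ Finset.range N, ⟪U^[j] x, y⟫ ^ 2)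
      atTop (𝓝 0) := by
  obtain ⟨W, hW, hWn⟩ := exists_completion_isometry (TensorProduct.mapIsometry U U)
  obtain ⟨W₁, hW₁, hW₁n⟩ := exists_completion_isometry
    (TensorProduct.mapIsometry U (LinearIsometry.id : H →ₗᵢ[ℝ] H))
  obtain ⟨W₂, hW₂, hW₂n⟩ := exists_completion_isometry
    (TensorProduct.mapIsometry (LinearIsometry.id : H →ₗᵢ[ℝ] H) U)
  let t : H → H → UniformSpace.Completion (H ⊗[ℝ] H) := fun a b => ((a ⊗ₜ[ℝ] b : H ⊗[ℝ] H) : _)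
  have ht : ∀ a b c d, ⟪t a b, t c d⟫ = ⟪a, c⟫ * ⟪b, d⟫ := by
    intro a b c d; simp [t]
  have hWt : ∀ a b, W (t a b) = t (U a) (U b) := fun a b => by simp [t, hW]
  have hW₁t : ∀ a b, W₁ (t a b) = t (U a) b := fun a b => by simp [t, hW₁]
  have hW₂t : ∀ a b, W₂ (t a b) = t a (U b) := fun a b => by simp [t, hW₂]
  have hWit : ∀ n a b, W^[n] (t a b) = t (U^[n] a) (U^[n] b) := by
    intro n
    induction n with
    | zero => simp
    | succ n ih => intro a b; simp [Function.iterate_succ, hWt, ih]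
  have hWin : ∀ n F, ‖W^[n] F‖ = ‖F‖ := by
    intro n
    induction n with
    | zero => simp
    | succ n ih => intro F; simp [Function.iterate_succ, hWn, ih]
  -- elementary tensors span a dense subspace of the completed tensor square
  have hdense : Dense (Submodule.span ℝ (range fun p : H × H => t p.1 p.2) :
      Set (UniformSpace.Completion (H ⊗[ℝ] H))) := by
    refine (UniformSpace.Completion.denseRange_coe (α := H ⊗[ℝ] H)).mono ?_
    rintro _ ⟨z, rfl⟩
    induction z using TensorProduct.induction_on with
    | zero => rw [UniformSpace.Completion.coe_zero]; exact Submodule.zero_mem _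
    | tmul a b => exact Submodule.subset_span ⟨(a, b), rfl⟩
    | add a b ha hb =>
      rw [UniformSpace.Completion.coe_add]
      exact Submodule.add_mem _ ha hb
  have hweak : ∀ F G, Tendsto (fun n => ⟪W^[h n] F, G⟫) atTop
      (𝓝 ((⟪F, G⟫ + ⟪W₁ F, G⟫ + ⟪W₂ F, G⟫ + ⟪W F, G⟫) / 4)) := by
    intro F G
    have := weak_tendsto_of_dense_span (fun n => W ^ h n) (fun n F => ?_)
      ((1 / 4 : ℝ) • (1 + W₁ + W₂ + W)) _ hdense ?_ F G
    · convert! this using 2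
      · simp
      · simp [inner_add_left, inner_smul_left]; ring
    · simp [hWin]
    · rintro _ ⟨⟨a, b⟩, rfl⟩ _ ⟨⟨c, d⟩, rfl⟩
      have := (hU a c).mul (hU b d)
      convert! this using 2
      · simp [hWit, ht]
      · simp [inner_add_left, inner_smul_left, hW₁t, hW₂t, hWt, ht]; ring
  have hWle : ‖W‖ ≤ 1 := W.opNorm_le_bound zero_le_one (fun F => by simp [hWn])
  have hmean := W.tendsto_birkhoffAverage_orthogonalProjection hWle (t x x)
  set P := (W : UniformSpace.Completion (H ⊗[ℝ] H) →ₗ[ℝ] UniformSpace.Completion (H ⊗[ℝ] H)).eqLocus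
    (1 : UniformSpace.Completion (H ⊗[ℝ] H) →L[ℝ] UniformSpace.Completion (H ⊗[ℝ] H)) with hP
  set F : UniformSpace.Completion (H ⊗[ℝ] H) := ↑(P.orthogonalProjectionOnto (t x x)) with hF
  have hWF : W F = F := (P.orthogonalProjectionOnto (t x x)).2
  have hWiF : ∀ n, W^[n] F = F := fun n => Function.iterate_fixed hWF n
  -- strict convexity turns the weak limit into invariance under the first factor alone
  have hW₁F : W₁ F = F := by
    have h1 := tendsto_nhds_unique (hweak F F) (by simp only [hWiF]; exact tendsto_const_nhds)
    rw [hWF] at h1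
    have h2 := real_inner_le_norm (W₁ F) F
    have h3 := real_inner_le_norm (W₂ F) F
    rw [hW₁n] at h2
    rw [hW₂n] at h3
    rw [real_inner_self_eq_norm_mul_norm] at h1
    refine eq_of_norm_le_re_inner_eq_norm_sq (𝕜 := ℝ) (hW₁n F).le ?_
    simp only [RCLike.re_to_real]
    nlinarith
  have hinner : ∀ G, ⟪F, W₁ G⟫ = ⟪F, G⟫ := by
    intro G
    let L : UniformSpace.Completion (H ⊗[ℝ] H) →ₗᵢ[ℝ] UniformSpace.Completion (H ⊗[ℝ] H) :=
      ⟨W₁.toLinearMap, hW₁n⟩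
    have := L.inner_map_map F G
    change ⟪W₁ F, W₁ G⟫ = _ at this
    rwa [hW₁F] at this
  have hFx : ∀ n, ⟪F, t (U^[n] x) x⟫ = ⟪F, t x x⟫ := by
    intro n
    induction n with
    | zero => rfl
    | succ n ih => rw [Function.iterate_succ_apply', ← hW₁t, hinner, ih]
  let ℓ : H →L[ℝ] ℝ := (innerSL ℝ F).comp ((UniformSpace.Completion.toComplL
    (𝕜 := ℝ) (E := H ⊗[ℝ] H)).comp ((TensorProduct.mkL ℝ H H).flip x))
  have hℓ : ∀ a, ℓ a = ⟪F, t a x⟫ := fun a => rfl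
  have hF0 : ⟪F, t x x⟫ = 0 := by
    have h1 : Tendsto (fun N => ℓ (birkhoffAverage ℝ U _root_.id N x)) atTop (𝓝 (ℓ 0)) :=
      (ℓ.continuous.tendsto 0).comp hx
    rw [map_zero] at h1
    refine tendsto_nhds_unique (tendsto_const_nhds.congr' ?_) h1
    filter_upwards [eventually_ne_atTop 0] with N hN
    have h3 : ∀ n, ℓ (U^[n] x) = ⟪F, t x x⟫ := fun n => (hℓ _).trans (hFx n)
    rw [birkhoffAverage, birkhoffSum, map_smul, map_sum]
    simp [h3, hN]
  have hFz : F = 0 := by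
    have h1 : ⟪F, F⟫ = ⟪F, t x x⟫ := by
      have := P.inner_orthogonalProjectionOnto_eq_of_mem_left
        (P.orthogonalProjectionOnto (t x x)) (t x x)
      rwa [Submodule.coe_inner] at this
    rw [hF0] at h1
    exact inner_self_eq_zero.1 h1
  rw [hFz] at hmean
  have h2 := hmean.inner (𝕜 := ℝ) (tendsto_const_nhds (x := t y y))
  rw [inner_zero_left] at h2
  refine h2.congr fun N => ?_
  simp only [birkhoffAverage, birkhoffSum, inner_smul_left, sum_inner, _root_.id, hWit, ht]
  simp [sq]

/-! ### Weak mixing from a weak limit -/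

/-- An ergodic map some powers of which converge weakly to the average of the identity and the map
itself is weakly mixing. -/
theorem weakly_mixing_of_weak_limit {X : Type*} [MeasurableSpace X] {μ : Measure X}
    [IsProbabilityMeasure μ] {T : X → X} (hT : Ergodic T μ) (h : ℕ → ℕ)
    (hlim : ∀ A B : Set X, MeasurableSet A → MeasurableSet B →
      Tendsto (fun n => μ.real (T^[h n] ⁻¹' A ∩ B)) atTop
        (𝓝 ((μ.real (A ∩ B) + μ.real (T ⁻¹' A ∩ B)) / 2)))
    {A B : Set X} (hA : MeasurableSet A) (hB : MeasurableSet B) :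
    Tendsto (fun n : ℕ => (1 / n : ℝ) * ∑ j ∈ Finset.range n,
      (μ.real (T^[j] ⁻¹' A ∩ B) - μ.real A * μ.real B) ^ 2) atTop (𝓝 0) := by
  have hTm : MeasurePreserving T μ μ := hT.toMeasurePreserving
  let U : Lp ℝ 2 μ →ₗᵢ[ℝ] Lp ℝ 2 μ := Lp.compMeasurePreservingₗᵢ ℝ T hTm
  let ι : ∀ s : Set X, MeasurableSet s → Lp ℝ 2 μ := fun s hs =>
    indicatorConstLp 2 hs (measure_ne_top μ s) 1
  have hι : ∀ s hs t ht, ⟪ι s hs, ι t ht⟫ = μ.real (s ∩ t) := fun s hs t ht =>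
    L2.real_inner_indicatorConstLp_one_indicatorConstLp_one hs ht _ _
  have hUn : ∀ n s hs, U^[n] (ι s hs) = ι (T^[n] ⁻¹' s) ((hTm.iterate n).measurable hs) := by
    intro n s hs
    change (Lp.compMeasurePreserving T hTm)^[n] _ = _
    rw [Lp.compMeasurePreserving_iterate]
    exact Lp.indicatorConstLp_compMeasurePreserving ..
  have hU1 : ∀ s hs, U (ι s hs) = ι (T ⁻¹' s) (hTm.measurable hs) := fun s hs => hUn 1 s hs
  have hdense : Dense (Submodule.span ℝ {f | ∃ s hs, f = ι s hs} : Set (Lp ℝ 2 μ)) := by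
    intro f
    refine Lp.induction (by simp) (motive := fun f => f ∈ closure _) ?_ ?_ isClosed_closure f
    · intro c s hs hμs
      apply subset_closure
      have : (Lp.simpleFunc.indicatorConst 2 hs hμs.ne c : Lp ℝ 2 μ) = c • ι s hs := by
        rw [Lp.simpleFunc.coe_indicatorConst]
        apply Lp.ext
        filter_upwards [Lp.coeFn_smul c (ι s hs), indicatorConstLp_coeFn (p := 2) (hs := hs)
          (hμs := hμs.ne) (c := c), indicatorConstLp_coeFn (p := 2) (hs := hs)
          (hμs := measure_ne_top μ s) (c := (1 : ℝ))] with z h1 h2 h3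
        rw [h1, h2, Pi.smul_apply, h3]
        by_cases hz : z ∈ s <;> simp [hz]
      rw [this]
      exact Submodule.smul_mem _ _ (Submodule.subset_span ⟨s, hs, rfl⟩)
    · intro f g hf hg _ h1 h2
      rw [← Submodule.topologicalClosure_coe] at h1 h2 ⊢
      exact Submodule.add_mem _ h1 h2
  have hUit : ∀ n f, (U.toContinuousLinearMap ^ n) f = U^[n] f := by
    intro n f; simp
  have hUnorm : ∀ n f, ‖U^[n] f‖ = ‖f‖ := by
    intro n
    induction n with
    | zero => simp
    | succ n ih => intro f; rw [Function.iterate_succ_apply, ih, U.norm_map]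
  have hweak : ∀ x y, Tendsto (fun n => ⟪U^[h n] x, y⟫) atTop
      (𝓝 ((⟪x, y⟫ + ⟪U x, y⟫) / 2)) := by
    intro x y
    have := weak_tendsto_of_dense_span (fun n => U.toContinuousLinearMap ^ h n)
      (fun n f => by rw [hUit, hUnorm]) ((1 / 2 : ℝ) • (1 + U.toContinuousLinearMap))
      _ hdense ?_ x y
    · convert! this using 2
      · rw [hUit]
      · simp [inner_add_left, inner_smul_left]; ring
    · rintro _ ⟨s, hs, rfl⟩ _ ⟨t, ht, rfl⟩
      convert! hlim s t hs ht using 2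
      · rw [hUit, hUn, hι]
      · simp [inner_add_left, inner_smul_left, hU1, hι]; ring
  set e := ι univ MeasurableSet.univ with he
  set x := ι A hA - μ.real A • e with hxdef
  have hUe : U e = e := by rw [he, hU1]; rfl
  have hxe : ⟪x, e⟫ = 0 := by
    rw [hxdef, inner_sub_left, inner_smul_left, hι, hι]
    simp
  have hx : Tendsto (fun N => birkhoffAverage ℝ U _root_.id N x) atTop (𝓝 0) := by
    have hle : ‖U.toContinuousLinearMap‖ ≤ 1 := U.norm_toContinuousLinearMap_le
    have hmean := U.toContinuousLinearMap.tendsto_birkhoffAverage_orthogonalProjection hle x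
    set P := (U.toContinuousLinearMap : Lp ℝ 2 μ →ₗ[ℝ] Lp ℝ 2 μ).eqLocus
      (1 : Lp ℝ 2 μ →L[ℝ] Lp ℝ 2 μ) with hP
    set F : Lp ℝ 2 μ := ↑(P.orthogonalProjectionOnto x) with hF
    have hUF : U F = F := (P.orthogonalProjectionOnto x).2
    -- by ergodicity the limit is a constant, and its mean is that of `x`, namely zero
    have hFe : ⟪e, F⟫ = 0 := by
      have := P.inner_orthogonalProjectionOnto_eq_of_mem_left ⟨e, hUe⟩ x
      rw [Submodule.coe_inner] at this
      change ⟪e, F⟫ = ⟪e, x⟫ at this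
      rw [this, real_inner_comm, hxe]
    obtain ⟨c, hc⟩ := hT.ae_eq_const_of_ae_eq_comp_ae (Lp.aestronglyMeasurable F) (by
      have := Lp.coeFn_compMeasurePreserving F hTm
      rw [← show U F = Lp.compMeasurePreserving T hTm F from rfl, hUF] at this
      exact this.symm)
    have hc0 : c = 0 := by
      rw [he, L2.inner_indicatorConstLp_one, setIntegral_univ, integral_congr_ae hc] at hFe
      simpa using hFe
    have hF0 : F = 0 := by
      rw [Lp.eq_zero_iff_ae_eq_zero]
      filter_upwards [hc] with z hz
      simp [hz, hc0]
    rw [hF0] at hmean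
    exact hmean
  refine (cesaro_sq_tendsto_zero U h hweak x hx (ι B hB)).congr fun N => ?_
  congr 1
  refine Finset.sum_congr rfl fun j _ => ?_
  have hUje : U^[j] e = e := Function.iterate_fixed hUe j
  have : U^[j] x = U^[j] (ι A hA) - μ.real A • e := by
    rw [← hUit, hxdef, map_sub, map_smul, hUit, hUit, hUje]
  rw [this, inner_sub_left, inner_smul_left, hUn, hι, hι]
  simp

/-! ### The tower over a rotation -/

/-- The tower of height two over the rotation of `[0, 1)` by `α`, with second floor `[1, 3/2)` above
`[0, 1/2)`: a point of `[0, 1/2)` moves up by `1`, every other point of `[0, 3/2)` moves to the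
rotated position of the base point below it (which `Int.fract` computes in both cases, since the
second floor is the translate of `[0, 1/2)` by `1`). -/
noncomputable def towerMap (α x : ℝ) : ℝ := if x < 1 / 2 then x + 1 else Int.fract (x + α)

/-- The inverse of `towerMap` on `[0, 3/2)`. -/
noncomputable def towerInv (α x : ℝ) : ℝ :=
  if 1 ≤ x then x - 1 else
    if Int.fract (x - α) < 1 / 2 then Int.fract (x - α) + 1 else Int.fract (x - α)

lemma measurable_towerMap (α : ℝ) : Measurable (towerMap α) :=
  Measurable.ite measurableSet_Iio (by fun_prop) (by fun_prop)

lemma measurable_towerInv (α : ℝ) : Measurable (towerInv α) :=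
  Measurable.ite measurableSet_Ici (by fun_prop)
    (Measurable.ite (measurableSet_lt (by fun_prop) (by fun_prop)) (by fun_prop) (by fun_prop))

lemma towerMap_mem (α : ℝ) {x : ℝ} (hx : 0 ≤ x) : towerMap α x ∈ Ico (0 : ℝ) (3 / 2) := by
  unfold towerMap
  have := Int.fract_nonneg (x + α)
  have := Int.fract_lt_one (x + α)
  split_ifs <;> constructor <;> linarith

lemma towerInv_mem (α : ℝ) {x : ℝ} (hx : x ∈ Icc (0 : ℝ) (3 / 2)) :
    towerInv α x ∈ Icc (0 : ℝ) (3 / 2) := by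
  unfold towerInv
  have := Int.fract_nonneg (x - α)
  have := Int.fract_lt_one (x - α)
  have := hx.1
  have := hx.2
  split_ifs <;> constructor <;> linarith

lemma towerInv_towerMap (α : ℝ) {x : ℝ} (hx : x ∈ Ico (0 : ℝ) (3 / 2)) :
    towerInv α (towerMap α x) = x := by
  obtain ⟨h0, h1⟩ := hx
  by_cases h : x < 1 / 2
  · rw [towerMap, if_pos h, towerInv, if_pos (by linarith)]
    ring
  · have h2 : Int.fract (Int.fract (x + α) - α) = Int.fract x := by
      rw [Int.fract_eq_fract]
      exact ⟨-⌊x + α⌋, by rw [Int.fract]; push_cast; ring⟩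
    have h3 := Int.fract_lt_one (x + α)
    simp only [towerMap, if_neg h, towerInv, if_neg h3.not_ge, h2]
    by_cases h4 : x < 1
    · have : Int.fract x = x := Int.fract_eq_self.2 ⟨h0, h4⟩
      rw [this, if_neg h]
    · have : Int.fract x = x - 1 := by
        rw [Int.fract_eq_iff]
        exact ⟨by linarith, by linarith, 1, by norm_num⟩
      rw [this, if_pos (by linarith)]
      ring

lemma towerMap_towerInv (α : ℝ) {x : ℝ} (hx : x ∈ Ico (0 : ℝ) (3 / 2)) :
    towerMap α (towerInv α x) = x := by
  obtain ⟨h0, h1⟩ := hx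
  by_cases h : 1 ≤ x
  · simp only [towerInv, if_pos h, towerMap]
    rw [if_pos (by linarith)]; ring
  · have hx1 : Int.fract x = x := Int.fract_eq_self.2 ⟨h0, by linarith⟩
    simp only [towerInv, if_neg h]
    have h2 := Int.fract_nonneg (x - α)
    split_ifs with h3
    · rw [towerMap, if_neg (by linarith)]
      conv_rhs => rw [← hx1]
      rw [Int.fract_eq_fract]
      exact ⟨1 - ⌊x - α⌋, by rw [Int.fract]; push_cast; ring⟩
    · rw [towerMap, if_neg h3]
      conv_rhs => rw [← hx1]
      rw [Int.fract_eq_fract]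
      exact ⟨- ⌊x - α⌋, by rw [Int.fract]; push_cast; ring⟩

/-- The coordinate in `[0, 1)` of a point of the unit circle. -/
noncomputable def circleCoord (θ : UnitAddCircle) : ℝ := AddCircle.measurableEquivIco 1 0 θ

lemma measurable_circleCoord : Measurable circleCoord :=
  measurable_subtype_coe.comp (AddCircle.measurableEquivIco 1 0).measurable

lemma circleCoord_coe (x : ℝ) : circleCoord (x : UnitAddCircle) = Int.fract x := by
  have := AddCircle.coe_equivIco_mk_apply (1 : ℝ) x
  rw [div_one, mul_one] at this
  exact this

lemma measurePreserving_coe_Ico (a : ℝ) :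
    MeasurePreserving (fun x : ℝ => (x : UnitAddCircle)) (volume.restrict (Ico a (a + 1))) := by
  rw [restrict_Ico_eq_restrict_Ioc]
  exact UnitAddCircle.measurePreserving_mk a

lemma measurePreserving_fract (a : ℝ) :
    MeasurePreserving (Int.fract : ℝ → ℝ) (volume.restrict (Ico a (a + 1)))
      (volume.restrict (Ico 0 1)) := by
  have key : ∀ a : ℝ, Measure.map (Int.fract : ℝ → ℝ) (volume.restrict (Ico a (a + 1))) =
      Measure.map circleCoord volume := by
    intro a
    rw [← (measurePreserving_coe_Ico a).map_eq,
      Measure.map_map measurable_circleCoord (measurePreserving_coe_Ico a).measurable]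
    congr 1
    funext x
    exact (circleCoord_coe x).symm
  refine ⟨measurable_fract, ?_⟩
  rw [key a, ← key 0, zero_add]
  conv_rhs => rw [← Measure.map_id (μ := volume.restrict (Ico (0 : ℝ) 1))]
  refine Measure.map_congr ?_
  filter_upwards [ae_restrict_mem measurableSet_Ico] with x hx
  exact Int.fract_eq_self.2 hx

lemma measurePreserving_towerMap (α : ℝ) :
    MeasurePreserving (towerMap α) (volume.restrict (Ico 0 (3 / 2)))
      (volume.restrict (Ico 0 (3 / 2))) := by
  refine ⟨measurable_towerMap α, ?_⟩
  have hI : Ico (0 : ℝ) (1 / 2) ∪ Ico (1 / 2) (3 / 2) = Ico 0 (3 / 2) :=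
    Ico_union_Ico_eq_Ico (by norm_num) (by norm_num)
  have hJ : Ico (0 : ℝ) 1 ∪ Ico 1 (3 / 2) = Ico 0 (3 / 2) :=
    Ico_union_Ico_eq_Ico (by norm_num) (by norm_num)
  have hshift : ∀ b c d : ℝ, MeasurePreserving (fun x : ℝ => x + d) (volume.restrict (Ico b c))
      (volume.restrict (Ico (b + d) (c + d))) := by
    intro b c d
    have := (measurePreserving_add_right (volume : Measure ℝ) d).restrict_preimage
      (s := Ico (b + d) (c + d)) measurableSet_Ico
    convert! this using 2
    ext x; simp
  have h1 : Measure.map (towerMap α) (volume.restrict (Ico 0 (1 / 2))) =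
      volume.restrict (Ico 1 (3 / 2)) := by
    have h := (hshift 0 (1 / 2) 1).map_eq
    norm_num at h
    norm_num
    rw [← h]
    refine Measure.map_congr ?_
    filter_upwards [ae_restrict_mem measurableSet_Ico] with x hx
    rw [towerMap, if_pos (by linarith [hx.2])]
  have h2 : Measure.map (towerMap α) (volume.restrict (Ico (1 / 2) (3 / 2))) =
      volume.restrict (Ico 0 1) := by
    have h := (measurePreserving_fract (1 / 2 + α)).comp
      (by simpa [add_right_comm] using hshift (1 / 2) (1 / 2 + 1) α)
    rw [← h.map_eq]
    norm_num
    refine Measure.map_congr ?_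
    filter_upwards [ae_restrict_mem measurableSet_Ico] with x hx
    rw [towerMap, if_neg (by linarith [hx.1])]
    rfl
  have hd1 : Disjoint (Ico (0 : ℝ) (1 / 2)) (Ico (1 / 2) (3 / 2)) := Ico_disjoint_Ico_same
  have hd2 : Disjoint (Ico (0 : ℝ) 1) (Ico 1 (3 / 2)) := Ico_disjoint_Ico_same
  conv_lhs => rw [← hI, Measure.restrict_union hd1 measurableSet_Ico,
    Measure.map_add _ _ (measurable_towerMap α), h1, h2]
  conv_rhs => rw [← hJ, Measure.restrict_union hd2 measurableSet_Ico]
  exact add_comm _ _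

/-- The 1-periodic indicator function of `[0, 1/2)`, so that the return time of `x ∈ [0, 1)` to the
base of the tower is `1 + baseInd x`. -/
noncomputable def baseInd (x : ℝ) : ℕ := if Int.fract x < 1 / 2 then 1 else 0

lemma towerMap_return (α : ℝ) {y : ℝ} (hy : y ∈ Ico (0 : ℝ) 1) :
    (towerMap α)^[1 + baseInd y] y = Int.fract (y + α) := by
  have hf : Int.fract y = y := Int.fract_eq_self.2 hy
  by_cases h : y < 1 / 2
  · have h1 : ¬ (y + 1 < 1 / 2) := by linarith [hy.1]
    have h2 : y + 1 + α = y + α + 1 := by ring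
    simp only [baseInd, hf, h, if_true, Function.iterate_succ, Function.iterate_zero,
      Function.comp, _root_.id, towerMap, h1, if_false]
    rw [h2, Int.fract_add_one]
  · simp only [baseInd, hf, if_neg h, add_zero, Function.iterate_one, towerMap]

/-- An invariant set which is null on the base is null, its part on the second floor being a
translate of a part of the base. -/
lemma null_of_null_base (α : ℝ) {A : Set ℝ} (hinv : towerMap α ⁻¹' A = A)
    (h0 : volume (A ∩ Ico 0 1) = 0) : volume (A ∩ Ico (0 : ℝ) (3 / 2)) = 0 := by
  have hsub : A ∩ Ico (0 : ℝ) (3 / 2) ⊆ (A ∩ Ico 0 1) ∪ (fun x => x + (-1)) ⁻¹' (A ∩ Ico 0 1) := by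
    rintro x ⟨hxA, hx0, hx1⟩
    by_cases h : x < 1
    · exact Or.inl ⟨hxA, hx0, h⟩
    · refine Or.inr ⟨?_, by constructor <;> linarith⟩
      rw [← hinv]
      have : towerMap α (x + -1) = x := by
        rw [towerMap, if_pos (by linarith)]; ring
      rwa [mem_preimage, this]
  refine measure_mono_null hsub (measure_union_null h0 ?_)
  rw [measure_preimage_add_right, h0]

/-- The first return to the base is the irrational rotation, so an invariant set meets the base in a
set invariant under an ergodic map. -/
lemma ergodic_towerMap {α : ℝ} (hα : Irrational α) :
    Ergodic (towerMap α) (volume.restrict (Ico 0 (3 / 2))) := by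
  refine ⟨measurePreserving_towerMap α, ⟨fun {A} hA hinv => ?_⟩⟩
  have hrot : Ergodic (fun θ : UnitAddCircle => θ + (α : UnitAddCircle)) := by
    rw [AddCircle.ergodic_add_right, addOrderOf_eq_zero_iff,
      AddCircle.isOfFinAddOrder_iff_exists_rat_eq_div]
    rintro ⟨r, hr⟩
    exact hα ⟨r, by simpa using hr⟩
  have hinv' : (fun θ : UnitAddCircle => θ + (α : UnitAddCircle)) ⁻¹' (circleCoord ⁻¹' A) =
      circleCoord ⁻¹' A := by
    ext θ
    obtain ⟨x, rfl⟩ := QuotientAddGroup.mk_surjective θ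
    change circleCoord ((x : UnitAddCircle) + (α : UnitAddCircle)) ∈ A ↔
      circleCoord (x : UnitAddCircle) ∈ A
    rw [← AddCircle.coe_add, circleCoord_coe, circleCoord_coe]
    have hit : ∀ n, (towerMap α)^[n] ⁻¹' A = A := fun n => by
      rw [preimage_iterate_eq]; exact Function.iterate_fixed hinv n
    have h1 := towerMap_return α (y := Int.fract x) ⟨Int.fract_nonneg x, Int.fract_lt_one x⟩
    have h2 : Int.fract (Int.fract x + α) = Int.fract (x + α) := by
      rw [Int.fract_eq_fract]
      exact ⟨-⌊x⌋, by rw [Int.fract]; push_cast; ring⟩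
    rw [← h2, ← h1]
    exact Set.ext_iff.1 (hit _) _
  have hvol : ∀ B : Set ℝ, MeasurableSet B →
      volume (circleCoord ⁻¹' B) = volume (B ∩ Ico 0 1) := by
    intro B hB
    rw [← (measurePreserving_coe_Ico 0).measure_preimage
      (measurable_circleCoord hB).nullMeasurableSet, zero_add, Measure.restrict_apply]
    · congr 1
      ext x
      simp only [mem_inter_iff, mem_preimage, circleCoord_coe, and_congr_left_iff]
      intro hx
      rw [Int.fract_eq_self.2 hx]
    · exact (measurePreserving_coe_Ico 0).measurable (measurable_circleCoord hB)
  have hν : ∀ B : Set ℝ, MeasurableSet B →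
      volume.restrict (Ico (0 : ℝ) (3 / 2)) B = volume (B ∩ Ico 0 (3 / 2)) := fun B hB =>
    Measure.restrict_apply hB
  rw [eventuallyConst_set']
  rcases eventuallyConst_set'.1 (hrot.toPreErgodic.aeconst_set
    (measurable_circleCoord hA) hinv') with h | h
  · left
    rw [ae_eq_empty] at h ⊢
    rw [hν A hA]
    rw [hvol A hA] at h
    exact null_of_null_base α hinv h
  · right
    rw [ae_eq_univ] at h ⊢
    rw [hν _ hA.compl]
    rw [← preimage_compl, hvol _ hA.compl] at h
    exact null_of_null_base α (by rw [preimage_compl, hinv]) h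

/-! ### Visit counts and powers of the tower map -/

lemma baseInd_fract (x : ℝ) : baseInd (Int.fract x) = baseInd x := by
  simp only [baseInd, Int.fract_fract]

lemma baseInd_add_int (x : ℝ) (n : ℤ) : baseInd (x + n) = baseInd x := by
  simp only [baseInd, Int.fract_add_intCast]

lemma measurable_baseInd : Measurable baseInd :=
  Measurable.ite (measurableSet_lt measurable_fract measurable_const)
    measurable_const measurable_const

/-- The time of the `k`-th return to the base. -/
lemma towerMap_orbit (α : ℝ) {y : ℝ} (hy : y ∈ Ico (0 : ℝ) 1) (k : ℕ) :
    (towerMap α)^[k + ∑ j ∈ Finset.range k, baseInd (y + j * α)] y = Int.fract (y + k * α) := by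
  induction k with
  | zero => simpa using (Int.fract_eq_self.2 hy).symm
  | succ k ih =>
    have h : k + 1 + ∑ j ∈ Finset.range (k + 1), baseInd (y + j * α) =
        (1 + baseInd (Int.fract (y + k * α))) +
          (k + ∑ j ∈ Finset.range k, baseInd (y + j * α)) := by
      rw [Finset.sum_range_succ, baseInd_fract]; ring
    rw [h, Function.iterate_add_apply, ih,
      towerMap_return α ⟨Int.fract_nonneg _, Int.fract_lt_one _⟩, Int.fract_eq_fract]
    exact ⟨-⌊y + k * α⌋, by rw [Int.fract]; push_cast; ring⟩

lemma baseInd_eq_floor (z : ℝ) : (baseInd z : ℤ) = 1 - (⌊z + 1 / 2⌋ - ⌊z⌋) := by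
  have h0 := Int.fract_nonneg z
  have h1 := Int.fract_lt_one z
  have h2 := Int.floor_add_fract z
  unfold baseInd
  split_ifs with h
  · have : ⌊z + 1 / 2⌋ = ⌊z⌋ := by
      rw [Int.floor_eq_iff]; constructor <;> linarith
    rw [this]; simp
  · have : ⌊z + 1 / 2⌋ = ⌊z⌋ + 1 := by
      rw [Int.floor_eq_iff]; push_cast; constructor <;> linarith
    rw [this]; simp

lemma sum_add_ediv {q : ℕ} (hq : 0 < q) (n : ℤ) :
    ∑ k ∈ Finset.range q, (n + k) / (q : ℤ) = n := by
  have hq' : (q : ℤ) ≠ 0 := by exact_mod_cast hq.ne'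
  have step : ∀ n : ℤ, ∑ k ∈ Finset.range q, (n + 1 + k) / (q : ℤ) =
      ∑ k ∈ Finset.range q, (n + k) / (q : ℤ) + 1 := by
    intro n
    have h := Finset.sum_range_sub (fun k : ℕ => (n + k) / (q : ℤ)) q
    rw [Finset.sum_sub_distrib] at h
    have h1 : (n + (q : ℤ)) / q = n / q + 1 := by
      rw [Int.add_ediv_of_dvd_right (dvd_refl _), Int.ediv_self hq']
    rw [h1] at h
    have h2 : ∀ k : ℕ, n + ((k + 1 : ℕ) : ℤ) = n + 1 + k := fun k => by push_cast; ring
    simp only [h2] at h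
    simp only [Nat.cast_zero, add_zero] at h
    linarith
  induction n using Int.induction_on with
  | zero =>
    refine Finset.sum_eq_zero fun k hk => ?_
    rw [zero_add]
    exact Int.ediv_eq_zero_of_lt (by positivity) (by exact_mod_cast Finset.mem_range.1 hk)
  | succ n ih => rw [step, ih]
  | pred n ih =>
    have h := step (-(n : ℤ) - 1)
    rw [sub_add_cancel, ih] at h
    linarith

/-- Hermite's identity. -/
lemma sum_floor_add_div {q : ℕ} (hq : 0 < q) (x : ℝ) :
    ∑ k ∈ Finset.range q, ⌊x + k / q⌋ = ⌊q * x⌋ := by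
  have hq' : (0 : ℝ) < q := by exact_mod_cast hq
  have h : ∀ k : ℕ, ⌊x + k / q⌋ = (⌊q * x⌋ + k) / (q : ℤ) := by
    intro k
    have h1 : x + k / q = (q * x + k) / q := by field_simp
    rw [h1, Int.floor_div_natCast, Int.floor_add_natCast]
  simp only [h]
  exact sum_add_ediv hq _

/-- The number of visits of `x, x + 1/q, …, x + (q-1)/q` to `[0, 1/2)` modulo `1`. For `q` odd it
takes both values `m` and `m + 1`. -/
lemma sum_baseInd_add_div {q m : ℕ} (hm : q = 2 * m + 1) (x : ℝ) :
    ∑ k ∈ Finset.range q, baseInd (x + k / q) = m + baseInd (q * x) := by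
  have hq : 0 < q := by omega
  have hq' : (0 : ℝ) < q := by exact_mod_cast hq
  zify
  simp only [baseInd_eq_floor, Finset.sum_sub_distrib]
  have h1 : ∀ k : ℕ, x + (k : ℝ) / q + 1 / 2 = (x + 1 / 2) + k / q := fun k => by ring
  simp only [h1, sum_floor_add_div hq]
  have h2 : (q : ℝ) * (x + 1 / 2) = q * x + 1 / 2 + (m : ℕ) := by
    rw [hm]; push_cast; ring
  rw [h2, Int.floor_add_natCast]
  simp only [Finset.sum_const, Finset.card_range, hm]
  push_cast
  simp
  ring

lemma sum_range_mul_mod {q p : ℕ} (hpq : p.Coprime q) (f : ℕ → ℕ)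
    (hf : ∀ k, f (k % q) = f k) :
    ∑ j ∈ Finset.range q, f (j * p) = ∑ k ∈ Finset.range q, f k := by
  rcases Nat.eq_zero_or_pos q with rfl | hq
  · simp
  have hmaps : MapsTo (fun j => j * p % q) (Finset.range q : Set ℕ) (Finset.range q : Set ℕ) := by
    intro j _
    simpa using Nat.mod_lt _ hq
  have hinj : InjOn (fun j => j * p % q) (Finset.range q : Set ℕ) := by
    intro i hi j hj hij
    have h : i ≡ j [MOD q] := Nat.ModEq.cancel_right_of_coprime hpq.symm hij
    simp only [Finset.coe_range, mem_Iio] at hi hj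
    exact Nat.ModEq.eq_of_lt_of_lt h hi hj
  refine Finset.sum_nbij (fun j => j * p % q) hmaps hinj
    (Finset.surjOn_of_injOn_of_card_le _ hmaps hinj le_rfl) fun j _ => (hf _).symm

/-- Multiplication by `p` permutes the residues modulo `q`, so the rotation by `p / q` has the same
visit count. -/
lemma sum_baseInd_add_mul_div {q m p : ℕ} (hm : q = 2 * m + 1) (hpq : p.Coprime q) (x : ℝ) :
    ∑ j ∈ Finset.range q, baseInd (x + (j * p : ℕ) / q) = m + baseInd (q * x) := by
  have hq : (0 : ℝ) < q := by rw [hm]; positivity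
  rw [← sum_baseInd_add_div hm]
  refine sum_range_mul_mod hpq (fun k => baseInd (x + k / q)) fun k => ?_
  have h : x + (k : ℝ) / q = x + ((k % q : ℕ) : ℝ) / q + ((k / q : ℕ) : ℤ) := by
    have : (k : ℝ) = (q : ℝ) * (k / q : ℕ) + (k % q : ℕ) := by
      exact_mod_cast (Nat.div_add_mod k q).symm
    rw [Int.cast_natCast]
    conv_lhs => rw [this]
    field_simp
    ring
  change baseInd _ = baseInd _
  rw [h, baseInd_add_int]

/-- The points at distance more than `η` from the grid `ℤ / (2q)`. -/
def IsFar (q : ℕ) (η x : ℝ) : Prop := ∀ i : ℤ, η < |x - i / (2 * q)|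

/-- A perturbation by at most `η` does not carry such a point across the grid. -/
lemma IsFar.floor_eq {q : ℕ} (hq : 0 < q) {η x s : ℝ} (hx : IsFar q η x) (hs : |s| ≤ η) (i : ℤ) :
    ⌊x + i / (2 * q) + s⌋ = ⌊x + i / (2 * q)⌋ := by
  have hq' : (0 : ℝ) < q := by exact_mod_cast hq
  obtain ⟨hs1, hs2⟩ := abs_le.1 hs
  have key : ∀ n : ℤ, x - ((2 * q * n - i : ℤ) : ℝ) / (2 * q) = x + i / (2 * q) - n := by
    intro n; push_cast; field_simp; ring
  have h1 := Int.floor_le (x + i / (2 * q))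
  have h2 := Int.lt_floor_add_one (x + i / (2 * q))
  have h3 := hx (2 * q * ⌊x + i / (2 * q)⌋ - i)
  have h4 := hx (2 * q * (⌊x + i / (2 * q)⌋ + 1) - i)
  rw [key] at h3 h4
  push_cast at h4
  rw [abs_of_nonneg (by linarith)] at h3
  rw [abs_of_neg (by linarith)] at h4
  rw [Int.floor_eq_iff]
  constructor <;> linarith

lemma IsFar.baseInd_eq {q : ℕ} (hq : 0 < q) {η x s : ℝ} (hx : IsFar q η x) (hs : |s| ≤ η)
    (k : ℕ) : baseInd (x + k / q + s) = baseInd (x + k / q) := by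
  have hq' : (0 : ℝ) < q := by exact_mod_cast hq
  zify
  rw [baseInd_eq_floor, baseInd_eq_floor]
  have h1 := hx.floor_eq hq hs (2 * k)
  have h2 := hx.floor_eq hq hs (2 * k + q)
  have e1 : ((2 * k : ℤ) : ℝ) / (2 * q) = k / q := by push_cast; field_simp
  have e2 : ((2 * k + q : ℤ) : ℝ) / (2 * q) = k / q + 1 / 2 := by push_cast; field_simp
  rw [e1] at h1
  rw [e2] at h2
  rw [h1, show x + (k : ℝ) / q + s + 1 / 2 = x + (k / q + 1 / 2) + s by ring, h2, ← add_assoc]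

/-- Off the grid, replacing `p / q` by `α` moves the first `q` points of the orbit by at most
`|q α - p|` and so preserves the visit count. -/
lemma IsFar.sum_baseInd {q m p : ℕ} (hm : q = 2 * m + 1) (hpq : p.Coprime q) {α x : ℝ}
    (hx : IsFar q |q * α - p| x) :
    ∑ j ∈ Finset.range q, baseInd (x + j * α) = m + baseInd (q * x) := by
  have hq : 0 < q := by omega
  have hq' : (0 : ℝ) < q := by exact_mod_cast hq
  rw [← sum_baseInd_add_mul_div hm hpq]
  refine Finset.sum_congr rfl fun j hj => ?_
  have hj' : (j : ℝ) ≤ q := by exact_mod_cast (Finset.mem_range.1 hj).le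
  rw [← hx.baseInd_eq hq (s := j / q * (q * α - p))]
  · congr 1
    push_cast
    field_simp
    ring
  · rw [abs_mul, abs_of_nonneg (by positivity)]
    exact mul_le_of_le_one_left (abs_nonneg _) (div_le_one_of_le₀ hj' hq'.le)

lemma IsFar.iterate_base {q m p : ℕ} (hm : q = 2 * m + 1) (hpq : p.Coprime q) {α x : ℝ}
    (hx : IsFar q |q * α - p| x) (hx1 : x ∈ Ico (0 : ℝ) 1) :
    x + (q * α - p) ∈ Ico (0 : ℝ) 1 ∧
    (towerMap α)^[q + m + 1] x =
      if baseInd (q * x) = 1 then x + (q * α - p) else towerMap α (x + (q * α - p)) := by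
  have hq : 0 < q := by omega
  have h0 := hx.floor_eq hq le_rfl 0
  simp only [Int.cast_zero, zero_div, add_zero] at h0
  rw [Int.floor_eq_zero_iff.2 hx1, Int.floor_eq_zero_iff] at h0
  have h := towerMap_orbit α hx1 q
  have h2 : Int.fract (x + q * α) = x + (q * α - p) := by
    rw [Int.fract_eq_iff]
    exact ⟨h0.1, h0.2, p, by push_cast; ring⟩
  rw [hx.sum_baseInd hm hpq, h2] at h
  refine ⟨h0, ?_⟩
  by_cases hb : baseInd (q * x) = 1
  · rw [if_pos hb, ← h, hb]
    rfl
  · have hb0 : baseInd (q * x) = 0 := by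
      unfold baseInd at hb ⊢
      split_ifs at hb ⊢
      · exact absurd rfl hb
      · rfl
    rw [if_neg hb, ← h, hb0, add_zero]
    exact Function.iterate_succ_apply' _ _ _

/-- Off the grid the power `q + m + 1` of the tower map is, up to the translation by `q α - p`, the
identity where `baseInd (q * x) = 1` and the tower map itself elsewhere. -/
lemma IsFar.iterate {q m p : ℕ} (hm : q = 2 * m + 1) (hpq : p.Coprime q) {α x : ℝ}
    (hx : IsFar q |q * α - p| x) (hxI : x ∈ Ico (0 : ℝ) (3 / 2)) :
    x + (q * α - p) ∈ Ico (0 : ℝ) (3 / 2) ∧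
    (towerMap α)^[q + m + 1] x =
      if baseInd (q * x) = 1 then x + (q * α - p) else towerMap α (x + (q * α - p)) := by
  have hq : 0 < q := by omega
  have hq' : (0 : ℝ) < q := by exact_mod_cast hq
  by_cases h1 : x < 1
  · obtain ⟨ha, hb⟩ := hx.iterate_base hm hpq ⟨hxI.1, h1⟩
    exact ⟨⟨ha.1, ha.2.trans (by norm_num)⟩, hb⟩
  -- points of the second floor are images of points of `[0, 1/2)`
  obtain ⟨y, rfl⟩ : ∃ y, x = y + 1 := ⟨x - 1, by ring⟩
  have hy : IsFar q |q * α - p| y := by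
    intro i
    have := hx (i + 2 * q)
    have e : y + 1 - ((i + 2 * q : ℤ) : ℝ) / (2 * q) = y - i / (2 * q) := by
      push_cast; field_simp; ring
    rwa [e] at this
  have hy0 : 0 ≤ y := by linarith
  have hy1 : y < 1 / 2 := by linarith [hxI.2]
  obtain ⟨ha, hb⟩ := hy.iterate_base hm hpq ⟨hy0, by linarith⟩
  have h2 : y + (q * α - p) < 1 / 2 := by
    have h0 := hy.floor_eq hq le_rfl q
    have e : ((q : ℤ) : ℝ) / (2 * q) = 1 / 2 := by push_cast; field_simp
    have h3 : ⌊y + 1 / 2⌋ = 0 := Int.floor_eq_zero_iff.2 (by constructor <;> linarith)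
    rw [e, h3, Int.floor_eq_zero_iff] at h0
    linarith [h0.2]
  have hT : ∀ z : ℝ, z < 1 / 2 → z + 1 = towerMap α z := fun z hz => by
    rw [towerMap, if_pos hz]
  have e2 : y + 1 + (q * α - p) = towerMap α (y + (q * α - p)) := by rw [← hT _ h2]; ring
  refine ⟨⟨by linarith [ha.1], by linarith⟩, ?_⟩
  have e3 : baseInd (q * (y + 1)) = baseInd (q * y) := by
    rw [mul_add, mul_one]; exact_mod_cast baseInd_add_int (q * y) q
  rw [e3, e2, hT y hy1, ← Function.iterate_succ_apply, Function.iterate_succ_apply', hb]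
  split_ifs <;> rfl

/-! ### The weak limit -/

lemma measureReal_le_add {X : Type*} [MeasurableSpace X] {μ : Measure X} {s t u : Set X}
    (h : s ⊆ t ∪ u) (ht : μ t ≠ ∞) (hu : μ u ≠ ∞) : μ.real s ≤ μ.real t + μ.real u :=
  (measureReal_mono h (measure_union_ne_top ht hu)).trans (measureReal_union_le _ _)

lemma tendsto_measureReal_symmDiff_translate {C : Set ℝ} (hC : MeasurableSet C)
    (hfin : volume C ≠ ∞) {t : ℕ → ℝ} (ht : Tendsto t atTop (𝓝 0)) :
    Tendsto (fun n => volume.real (symmDiff ((fun x => x + t n) ⁻¹' C) C)) atTop (𝓝 0) := by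
  let f : C(ℝ, C(ℝ, ℝ)) := ContinuousMap.curry ⟨fun p : ℝ × ℝ => p.2 + p.1, by fun_prop⟩
  have hf : Tendsto (fun n => f (t n)) atTop (𝓝 (f 0)) := (f.continuous.tendsto 0).comp ht
  have h := tendsto_measure_symmDiff_preimage_nhds_zero (μ := (volume : Measure ℝ))
    (ν := (volume : Measure ℝ)) hf
    (Eventually.of_forall fun n => measurePreserving_add_right volume (t n))
    (measurePreserving_add_right volume (0 : ℝ)) hC.nullMeasurableSet hfin
  have h0 : (f 0 : ℝ → ℝ) ⁻¹' C = C := by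
    ext x
    change x + 0 ∈ C ↔ x ∈ C
    rw [add_zero]
  rw [h0] at h
  exact (ENNReal.tendsto_toReal ENNReal.zero_ne_top).comp h

/-- The set of points whose `q`-th return to the base takes the longer of the two possible times,
an alternating union of intervals of length `1 / (2q)`. -/
def lateSet (q : ℕ) : Set ℝ := {x | baseInd (q * x) = 1}

lemma measurableSet_lateSet (q : ℕ) : MeasurableSet (lateSet q) :=
  (measurable_baseInd.comp (measurable_const_mul _)) (measurableSet_singleton 1)

lemma lateSet_translate {q : ℕ} (hq : 0 < q) :
    (fun x : ℝ => x + 1 / (2 * q)) ⁻¹' lateSet q = (lateSet q)ᶜ := by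
  have hq' : (0 : ℝ) < q := by exact_mod_cast hq
  ext x
  have e : (q : ℝ) * (x + 1 / (2 * q)) = q * x + 1 / 2 := by field_simp
  have h1 := baseInd_eq_floor (q * x)
  have h2 := baseInd_eq_floor (q * x + 1 / 2)
  rw [show (q : ℝ) * x + 1 / 2 + 1 / 2 = q * x + 1 by ring, Int.floor_add_one] at h2
  simp only [lateSet, mem_preimage, mem_ofPred_eq, mem_compl_iff, e]
  have h3 : baseInd (q * x) ≤ 1 := by unfold baseInd; split_ifs <;> simp
  omega

/-- Equidistribution of `lateSet (q n)`: the translation by `1 / (2q)` exchanges this set with its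
complement and hardly moves a fixed set `C`. -/
lemma tendsto_lateSet {q : ℕ → ℕ} (hq0 : ∀ n, 0 < q n) (hq : Tendsto q atTop atTop)
    {C : Set ℝ} (hC : MeasurableSet C) (hfin : volume C ≠ ∞) :
    Tendsto (fun n => volume.real (C ∩ lateSet (q n))) atTop (𝓝 (volume.real C / 2)) ∧
    Tendsto (fun n => volume.real (C \ lateSet (q n))) atTop (𝓝 (volume.real C / 2)) := by
  have ht : Tendsto (fun n => 1 / (2 * (q n : ℝ))) atTop (𝓝 0) := by
    have h1 : Tendsto (fun n => ((q n : ℕ) : ℝ)) atTop atTop :=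
      tendsto_natCast_atTop_atTop.comp hq
    simp only [one_div]
    exact (h1.const_mul_atTop (zero_lt_two' ℝ)).inv_tendsto_atTop
  have hδ := tendsto_measureReal_symmDiff_translate hC hfin ht
  have hsum : ∀ n, volume.real (C ∩ lateSet (q n)) + volume.real (C \ lateSet (q n)) =
      volume.real C := fun n => measureReal_inter_add_sdiff (measurableSet_lateSet _) hfin
  have hdiff : Tendsto (fun n => volume.real (C ∩ lateSet (q n)) -
      volume.real (C \ lateSet (q n))) atTop (𝓝 0) := by
    refine squeeze_zero_norm (fun n => ?_) hδ
    set t : ℝ := 1 / (2 * (q n : ℝ)) with ht'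
    set E := lateSet (q n)
    have hpre : ∀ D : Set ℝ, MeasurableSet D → volume ((fun x => x + t) ⁻¹' D) = volume D :=
      fun D hD => measure_preimage_add_right _ _ _
    have hfin' : volume ((fun x => x + t) ⁻¹' C) ≠ ∞ := by rwa [hpre C hC]
    have hΔ : volume (symmDiff ((fun x => x + t) ⁻¹' C) C) ≠ ∞ :=
      ne_top_of_le_ne_top (measure_union_ne_top hfin' hfin) (measure_mono symmDiff_subset_union)
    have h1 : volume.real (C ∩ E) = volume.real ((fun x => x + t) ⁻¹' C \ E) := by
      rw [measureReal_def, ← hpre _ (hC.inter (measurableSet_lateSet _)), preimage_inter,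
        lateSet_translate (hq0 n)]
      rfl
    rw [h1, Real.norm_eq_abs, abs_le]
    have h2 : volume.real ((fun x => x + t) ⁻¹' C \ E) ≤
        volume.real (C \ E) + volume.real (symmDiff ((fun x => x + t) ⁻¹' C) C) := by
      refine measureReal_le_add ?_ (measure_ne_top_of_subset sdiff_subset hfin) hΔ
      intro x hx
      by_cases hxC : x ∈ C
      · exact Or.inl ⟨hxC, hx.2⟩
      · exact Or.inr (Or.inl ⟨hx.1, hxC⟩)
    have h3 : volume.real (C \ E) ≤ volume.real ((fun x => x + t) ⁻¹' C \ E) +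
        volume.real (symmDiff ((fun x => x + t) ⁻¹' C) C) := by
      refine measureReal_le_add ?_ (measure_ne_top_of_subset sdiff_subset hfin') hΔ
      intro x hx
      by_cases hxC : x ∈ (fun x => x + t) ⁻¹' C
      · exact Or.inl ⟨hxC, hx.2⟩
      · exact Or.inr (Or.inr ⟨hx.1, hxC⟩)
    constructor <;> linarith
  constructor
  · have := (hdiff.const_add (volume.real C)).div_const 2
    rw [add_zero] at this
    refine this.congr fun n => ?_
    linarith [hsum n]
  · have := (hdiff.const_sub (volume.real C)).div_const 2
    rw [sub_zero] at this
    refine this.congr fun n => ?_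
    linarith [hsum n]

lemma volume_not_isFar_le {q : ℕ} (hq : 0 < q) {η : ℝ} (hη : 0 ≤ η) (hqη : q * η < 1 / 2) :
    volume.real ({x | ¬ IsFar q η x} ∩ Ico 0 (3 / 2)) ≤ 12 * (q * η) := by
  have hq' : (1 : ℝ) ≤ q := by exact_mod_cast hq
  have hsub : {x | ¬ IsFar q η x} ∩ Ico 0 (3 / 2) ⊆
      ⋃ i ∈ Finset.Icc (-1 : ℤ) (3 * q + 1),
        Icc ((i : ℝ) / (2 * q) - η) (i / (2 * q) + η) := by
    -- as `q * η < 1 / 2`, the indices of grid points within `η` of `[0, 3/2)` lie strictly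
    -- between `-2` and `3 * q + 2`
    rintro x ⟨hx, hx0, hx1⟩
    simp only [IsFar, mem_ofPred_eq, not_forall, not_lt] at hx
    obtain ⟨i, hi⟩ := hx
    obtain ⟨hi1, hi2⟩ := abs_le.1 hi
    have e : (i : ℝ) = i / (2 * q) * (2 * q) := by field_simp
    simp only [mem_iUnion]
    refine ⟨i, ?_, by linarith, by linarith⟩
    have h1 : (-2 : ℝ) < i := by rw [e]; nlinarith
    have h2 : (i : ℝ) < 3 * q + 2 := by rw [e]; nlinarith
    have h1' : (-2 : ℤ) < i := by exact_mod_cast h1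
    have h2' : i < 3 * q + 2 := by exact_mod_cast h2
    rw [Finset.mem_Icc]
    constructor <;> omega
  have hfin : volume (⋃ i ∈ Finset.Icc (-1 : ℤ) (3 * q + 1),
        Icc ((i : ℝ) / (2 * q) - η) (i / (2 * q) + η)) ≠ ∞ := by
    refine ((measure_biUnion_lt_top (Finset.finite_toSet _) fun i _ => ?_)).ne
    exact measure_Icc_lt_top
  refine (measureReal_mono hsub hfin).trans ((measureReal_biUnion_finset_le _ _).trans ?_)
  have h : ∀ i : ℤ, volume.real (Icc ((i : ℝ) / (2 * q) - η) (i / (2 * q) + η)) = 2 * η := by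
    intro i
    rw [Real.volume_real_Icc_of_le (by linarith)]
    ring
  simp only [h, Finset.sum_const, Int.card_Icc, nsmul_eq_mul]
  have e : ((3 * q + 1 + 1 - -1 : ℤ).toNat : ℝ) = 3 * q + 3 := by
    have : (3 * q + 1 + 1 - -1 : ℤ).toNat = 3 * q + 3 := by omega
    rw [this]; push_cast; ring
  rw [e]
  nlinarith

/-- The powers `q n + m n + 1` of the tower map converge weakly to the average of the identity and
the tower map. -/
theorem tendsto_towerMap_iterate {α : ℝ} {q p m : ℕ → ℕ} (hm : ∀ n, q n = 2 * m n + 1)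
    (hpq : ∀ n, (p n).Coprime (q n)) (hq : Tendsto q atTop atTop)
    (hε : Tendsto (fun n => q n * |q n * α - p n|) atTop (𝓝 0))
    {A B : Set ℝ} (hA : MeasurableSet A) (hB : MeasurableSet B) :
    Tendsto (fun n => (volume.restrict (Ico (0 : ℝ) (3 / 2))).real
        ((towerMap α)^[q n + m n + 1] ⁻¹' A ∩ B)) atTop
      (𝓝 (((volume.restrict (Ico (0 : ℝ) (3 / 2))).real (A ∩ B) +
        (volume.restrict (Ico (0 : ℝ) (3 / 2))).real (towerMap α ⁻¹' A ∩ B)) / 2)) := by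
  have hTA := measurable_towerMap α hA
  set I := Ico (0 : ℝ) (3 / 2) with hI
  have hIm : MeasurableSet I := measurableSet_Ico
  have hIfin : volume I ≠ ∞ := measure_Ico_lt_top.ne
  have hν : ∀ C, MeasurableSet C → (volume.restrict I).real C = volume.real (C ∩ I) :=
    fun C hC => by rw [measureReal_restrict_apply hC]
  have hq0 : ∀ n, 0 < q n := fun n => by rw [hm]; omega
  have hε0 : Tendsto (fun n => q n * α - p n) atTop (𝓝 0) := by
    refine squeeze_zero_norm (fun n => ?_) hε
    rw [Real.norm_eq_abs]
    have : (1 : ℝ) ≤ q n := by exact_mod_cast hq0 n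
    exact le_mul_of_one_le_left (abs_nonneg _) this
  rw [hν _ (hA.inter hB), hν _ (hTA.inter hB)]
  have hF : ∀ {C : Set ℝ}, volume (C ∩ I) ≠ ∞ := fun {C} =>
    measure_ne_top_of_subset inter_subset_right hIfin
  have hlim := ((tendsto_lateSet hq0 hq ((hA.inter hB).inter hIm) hF).1).add
    ((tendsto_lateSet hq0 hq ((hTA.inter hB).inter hIm) hF).2)
  rw [← add_div] at hlim
  have hδ1 := tendsto_measureReal_symmDiff_translate (hA.inter hIm) hF hε0
  have hδ2 := tendsto_measureReal_symmDiff_translate (hTA.inter hIm) hF hε0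
  have hδ := ((hε.const_mul 12).add hδ1).add hδ2
  rw [mul_zero, add_zero, add_zero] at hδ
  have hev : ∀ᶠ n in atTop, q n * |q n * α - p n| < 1 / 2 :=
    hε.eventually_lt_const (by norm_num)
  have hd : Tendsto (fun n => (volume.restrict I).real
      ((towerMap α)^[q n + m n + 1] ⁻¹' A ∩ B) -
      (volume.real (A ∩ B ∩ I ∩ lateSet (q n)) +
        volume.real ((towerMap α ⁻¹' A ∩ B ∩ I) \ lateSet (q n)))) atTop (𝓝 0) := by
    refine squeeze_zero_norm' ?_ hδ
    filter_upwards [hev] with n hn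
    set ε := q n * α - p n with hεdef
    set E := lateSet (q n) with hE
    have hEm : MeasurableSet E := measurableSet_lateSet _
    set Z := {x | ¬ IsFar (q n) |ε| x} ∩ I with hZ
    set D1 := symmDiff ((fun x => x + ε) ⁻¹' (A ∩ I)) (A ∩ I) with hD1
    set D2 := symmDiff ((fun x => x + ε) ⁻¹' (towerMap α ⁻¹' A ∩ I)) (towerMap α ⁻¹' A ∩ I)
      with hD2
    set W := (towerMap α)^[q n + m n + 1] ⁻¹' A ∩ B ∩ I with hW
    set V1 := A ∩ B ∩ I ∩ E with hV1
    set V2 := (towerMap α ⁻¹' A ∩ B ∩ I) \ E with hV2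
    have hDfin : ∀ C : Set ℝ, volume (symmDiff ((fun x => x + ε) ⁻¹' (C ∩ I)) (C ∩ I)) ≠ ∞ := by
      intro C
      refine ne_top_of_le_ne_top (measure_union_ne_top ?_ hF) (measure_mono symmDiff_subset_union)
      rw [measure_preimage_add_right]
      exact hF
    have hUfin : volume (Z ∪ D1 ∪ D2) ≠ ∞ :=
      measure_union_ne_top (measure_union_ne_top hF (hDfin _)) (hDfin _)
    have hU : volume.real (Z ∪ D1 ∪ D2) ≤
        12 * (q n * |ε|) + volume.real D1 + volume.real D2 := by
      refine (measureReal_union_le _ _).trans ?_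
      gcongr
      refine (measureReal_union_le _ _).trans ?_
      gcongr
      exact volume_not_isFar_le (hq0 n) (abs_nonneg _) hn
    have hV1fin : volume V1 ≠ ∞ := measure_ne_top_of_subset inter_subset_left hF
    have hV2fin : volume V2 ≠ ∞ := measure_ne_top_of_subset sdiff_subset hF
    have hV : volume.real V1 + volume.real V2 = volume.real (V1 ∪ V2) := by
      refine (measureReal_union ?_ (((hTA.inter hB).inter hIm).diff hEm) hV1fin hV2fin).symm
      exact Set.disjoint_left.2 fun x h1 h2 => h2.2 h1.2
    rw [hν _ ((((measurable_towerMap α).iterate _) hA).inter hB), hV, Real.norm_eq_abs]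
    refine (abs_le.2 ?_).trans hU
    -- off the exceptional sets, membership in both sides agrees
    have key : ∀ x ∉ Z ∪ D1 ∪ D2, (x ∈ W ↔ x ∈ V1 ∪ V2) := by
      intro x hx
      by_cases hxI : x ∈ I
      swap
      · exact ⟨fun h => absurd h.2 hxI,
          fun h => h.elim (fun h => absurd h.1.2 hxI) (fun h => absurd h.1.2 hxI)⟩
      simp only [mem_union, not_or] at hx
      obtain ⟨⟨hxZ, hx1⟩, hx2⟩ := hx
      have hfar : IsFar (q n) |ε| x := by
        by_contra h
        exact hxZ ⟨h, hxI⟩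
      obtain ⟨hxε, hit⟩ := hfar.iterate (hm n) (hpq n) hxI
      have e1 : x + ε ∈ A ↔ x ∈ A := by
        rw [hD1, Set.mem_symmDiff] at hx1
        simp only [mem_preimage, mem_inter_iff] at hx1
        tauto
      have e2 : towerMap α (x + ε) ∈ A ↔ towerMap α x ∈ A := by
        rw [hD2, Set.mem_symmDiff] at hx2
        simp only [mem_preimage, mem_inter_iff] at hx2
        tauto
      by_cases hxE : x ∈ E
      · rw [if_pos (show baseInd (q n * x) = 1 from hxE)] at hit
        simp only [hW, hV1, hV2, mem_inter_iff, mem_union, mem_preimage, Set.mem_sdiff, hit]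
        tauto
      · rw [if_neg (show ¬ baseInd (q n * x) = 1 from hxE)] at hit
        simp only [hW, hV1, hV2, mem_inter_iff, mem_union, mem_preimage, Set.mem_sdiff, hit]
        tauto
    have hWV : volume.real W ≤ volume.real (V1 ∪ V2) + volume.real (Z ∪ D1 ∪ D2) := by
      refine measureReal_le_add (fun x hx => ?_) (measure_union_ne_top hV1fin hV2fin) hUfin
      by_cases h : x ∈ Z ∪ D1 ∪ D2
      · exact Or.inr h
      · exact Or.inl ((key x h).1 hx)
    have hVW : volume.real (V1 ∪ V2) ≤ volume.real W + volume.real (Z ∪ D1 ∪ D2) := by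
      refine measureReal_le_add (fun x hx => ?_) hF hUfin
      by_cases h : x ∈ Z ∪ D1 ∪ D2
      · exact Or.inr h
      · exact Or.inl ((key x h).2 hx)
    constructor <;> linarith
  have := hd.add hlim
  rw [zero_add] at this
  exact this.congr fun n => by ring

/-- The Liouville number `∑ 3 ^ (-i!)` has the required approximations `p / q`, namely its partial
sums: the denominators are powers of `3`, hence odd, and the last summand makes the numerators
congruent to `1` modulo `3`. -/
lemma exists_good_rotation : ∃ (α : ℝ) (q p m : ℕ → ℕ), Irrational α ∧
    (∀ n, q n = 2 * m n + 1) ∧ (∀ n, (p n).Coprime (q n)) ∧ Tendsto q atTop atTop ∧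
    Tendsto (fun n => q n * |q n * α - p n|) atTop (𝓝 0) := by
  choose r hr using LiouvilleNumber.partialSum_eq_rat (m := 3) (by norm_num)
  have hfac : ∀ n, Nat.factorial (n + 1) < Nat.factorial (n + 2) := fun n =>
    (Nat.factorial_lt (Nat.succ_pos n)).2 (by omega)
  have hself : ∀ n, n ≤ Nat.factorial (n + 2) := fun n =>
    (by omega : n ≤ n + 2).trans (Nat.self_le_factorial _)
  refine ⟨liouvilleNumber 3, fun n => 3 ^ Nat.factorial (n + 2),
    fun n => r (n + 1) * 3 ^ (Nat.factorial (n + 2) - Nat.factorial (n + 1)) + 1,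
    fun n => 3 ^ Nat.factorial (n + 2) / 2, ?_, ?_, ?_, ?_, ?_⟩
  · exact_mod_cast (liouville_liouvilleNumber (m := 3) (by norm_num)).irrational
  · intro n
    have : Odd (3 ^ Nat.factorial (n + 2)) := Odd.pow (by decide)
    exact (Nat.two_mul_div_two_add_one_of_odd this).symm
  · intro n
    refine Nat.Coprime.pow_right _ ?_
    obtain ⟨k, hk⟩ := Nat.exists_eq_add_of_lt (hfac n)
    have e : Nat.factorial (n + 2) - Nat.factorial (n + 1) = k + 1 := by omega
    change Nat.Coprime (r (n + 1) * 3 ^ (Nat.factorial (n + 2) - Nat.factorial (n + 1)) + 1) 3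
    rw [e, pow_succ, ← mul_assoc, Nat.coprime_mul_right_add_left]
    exact Nat.coprime_one_left 3
  · refine tendsto_atTop_mono (fun n => ?_) tendsto_id
    exact (hself n).trans (Nat.lt_pow_self (by norm_num)).le
  · have h3 : Tendsto (fun n : ℕ => ((1 : ℝ) / 3) ^ n) atTop (𝓝 0) :=
      tendsto_pow_atTop_nhds_zero_of_lt_one (by norm_num) (by norm_num)
    refine squeeze_zero (fun n => by positivity) (fun n => ?_) h3
    have hsplit := LiouvilleNumber.partialSum_add_remainder (m := 3) (by norm_num) (n + 2)
    rw [LiouvilleNumber.partialSum_succ] at hsplit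
    have hr1 := hr (n + 1)
    push_cast at hr1
    rw [hr1] at hsplit
    have hrem := LiouvilleNumber.remainder_lt (m := 3) (n + 2) (by norm_num)
    have hpos := LiouvilleNumber.remainder_pos (m := 3) (by norm_num) (n + 2)
    set R := LiouvilleNumber.remainder 3 (n + 2)
    have hpow : (3 : ℝ) ^ Nat.factorial (n + 2) =
        3 ^ (Nat.factorial (n + 2) - Nat.factorial (n + 1)) * 3 ^ Nat.factorial (n + 1) := by
      rw [← pow_add]; congr 1; have := hfac n; omega
    have hq1 : (3 : ℝ) ≤ 3 ^ Nat.factorial (n + 2) :=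
      le_self_pow₀ (by norm_num) (Nat.factorial_pos _).ne'
    have he : (3 : ℝ) ^ Nat.factorial (n + 2) * liouvilleNumber 3 -
        (r (n + 1) * 3 ^ (Nat.factorial (n + 2) - Nat.factorial (n + 1)) + 1) =
        3 ^ Nat.factorial (n + 2) * R := by
      rw [← hsplit]
      have : (3 : ℝ) ^ Nat.factorial (n + 2) * (r (n + 1) / 3 ^ Nat.factorial (n + 1)) =
          r (n + 1) * 3 ^ (Nat.factorial (n + 2) - Nat.factorial (n + 1)) := by
        rw [hpow]; field_simp
      rw [mul_add, mul_add, this, mul_one_div_cancel (by positivity)]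
      ring
    push_cast
    rw [he]
    set Q := (3 : ℝ) ^ Nat.factorial (n + 2)
    have hQ : 0 < Q := by linarith
    rw [abs_of_pos (by positivity)]
    calc Q * (Q * R) ≤ Q * (Q * (1 / Q ^ (n + 2))) := by gcongr
      _ = (1 / Q) ^ n := by
        rw [one_div_pow, pow_add]
        field_simp
      _ ≤ (1 / 3) ^ n := by gcongr

/-! ### Transport to the unit interval -/

/-- The normalized Lebesgue measure on the phase space `[0, 3/2)` of `towerMap`. -/
noncomputable def towerMeasure : Measure ℝ :=
  ENNReal.ofReal (2 / 3) • volume.restrict (Ico (0 : ℝ) (3 / 2))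

lemma towerMeasure_real (s : Set ℝ) :
    towerMeasure.real s = 2 / 3 * (volume.restrict (Ico (0 : ℝ) (3 / 2))).real s := by
  rw [towerMeasure, measureReal_ennreal_smul_apply, ENNReal.toReal_ofReal (by norm_num)]

instance : IsProbabilityMeasure towerMeasure := by
  constructor
  rw [towerMeasure, Measure.smul_apply, Measure.restrict_apply_univ, Real.volume_Ico, smul_eq_mul,
    ← ENNReal.ofReal_mul (by norm_num)]
  norm_num

/-- The affine chart `[0, 1] → [0, 3/2]`. -/
noncomputable def chart (x : Icc (0 : ℝ) 1) : ℝ := 3 / 2 * x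

/-- The inverse chart, extended to a retraction `ℝ → [0, 1]`. -/
noncomputable def chartInv (y : ℝ) : Icc (0 : ℝ) 1 := projIcc 0 1 zero_le_one (2 / 3 * y)

lemma measurable_chartInv : Measurable chartInv :=
  (continuous_projIcc.comp (by fun_prop)).measurable

lemma chartInv_chart (x : Icc (0 : ℝ) 1) : chartInv (chart x) = x := by
  unfold chartInv chart
  rw [← mul_assoc, show (2 / 3 * (3 / 2) : ℝ) = 1 by norm_num, one_mul, projIcc_val]

lemma chart_chartInv {y : ℝ} (hy : y ∈ Icc (0 : ℝ) (3 / 2)) : chart (chartInv y) = y := by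
  unfold chartInv chart
  rw [projIcc_of_mem zero_le_one (by constructor <;> linarith [hy.1, hy.2])]
  ring

lemma chart_mem (x : Icc (0 : ℝ) 1) : chart x ∈ Icc (0 : ℝ) (3 / 2) := by
  unfold chart
  constructor <;> linarith [x.2.1, x.2.2]

lemma measurePreserving_chart : MeasurePreserving chart volume towerMeasure := by
  have h1 : MeasurePreserving (fun x : ℝ => 3 / 2 * x) volume
      (ENNReal.ofReal (2 / 3) • volume) := by
    refine ⟨by fun_prop, ?_⟩
    have := Real.map_volume_mul_left (a := 3 / 2) (by norm_num)
    rw [this]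
    norm_num [abs_of_pos]
  have h2 := h1.restrict_preimage (s := Icc (0 : ℝ) (3 / 2)) measurableSet_Icc
  have h3 : (fun x : ℝ => 3 / 2 * x) ⁻¹' Icc (0 : ℝ) (3 / 2) = Icc 0 1 := by
    ext x
    simp only [mem_preimage, mem_Icc]
    constructor <;> rintro ⟨h, h'⟩ <;> constructor <;> linarith
  rw [h3, Measure.restrict_smul, ← restrict_Ico_eq_restrict_Icc (a := 0) (b := 3 / 2)] at h2
  exact h2.comp (measurePreserving_subtype_coe measurableSet_Icc)

/-- There is an invertible Lebesgue-measure-preserving map of `[0,1]` (Chacon's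
transformation) which is weakly mixing but not strongly mixing. -/
theorem exists_weakly_mixing_not_strongly_mixing_interval :
    ∃ T S : Set.Icc (0:ℝ) 1 → Set.Icc (0:ℝ) 1,
      Measurable T ∧ Measurable S ∧
      (∀ᵐ x ∂(volume : Measure (Set.Icc (0:ℝ) 1)), S (T x) = x) ∧
      (∀ᵐ x ∂(volume : Measure (Set.Icc (0:ℝ) 1)), T (S x) = x) ∧
      (∀ A : Set (Set.Icc (0:ℝ) 1), MeasurableSet A → volume (T ⁻¹' A) = volume A) ∧
      (∀ A B : Set (Set.Icc (0:ℝ) 1), MeasurableSet A → MeasurableSet B →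
        Tendsto
          (fun n : ℕ => (1 / n : ℝ) *
            ∑ j ∈ Finset.range n,
              ((volume (T^[j] ⁻¹' A ∩ B)).toReal -
                (volume A).toReal * (volume B).toReal) ^ 2)
          atTop (nhds 0)) ∧
      (∃ A B : Set (Set.Icc (0:ℝ) 1), MeasurableSet A ∧ MeasurableSet B ∧
        ¬ Tendsto (fun n : ℕ => volume (T^[n] ⁻¹' A ∩ B)) atTop
            (nhds (volume A * volume B))) := by
  obtain ⟨α, q, p, m, hα, hm, hpq, hq, hε⟩ := exists_good_rotation
  let T : Icc (0 : ℝ) 1 → Icc (0 : ℝ) 1 := fun x => chartInv (towerMap α (chart x))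
  let S : Icc (0 : ℝ) 1 → Icc (0 : ℝ) 1 := fun x => chartInv (towerInv α (chart x))
  have hc := measurePreserving_chart
  have hT : Measurable T :=
    measurable_chartInv.comp ((measurable_towerMap α).comp hc.measurable)
  have hS : Measurable S :=
    measurable_chartInv.comp ((measurable_towerInv α).comp hc.measurable)
  have hcT : Function.Semiconj chart T (towerMap α) := fun x =>
    chart_chartInv (Ico_subset_Icc_self (towerMap_mem α (chart_mem x).1))
  have hcS : Function.Semiconj chart S (towerInv α) := fun x =>
    chart_chartInv (towerInv_mem α (chart_mem x))
  have hae : ∀ᵐ x : Icc (0 : ℝ) 1, chart x ∈ Ico (0 : ℝ) (3 / 2) :=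
    hc.quasiMeasurePreserving.ae (Measure.ae_smul_measure (ae_restrict_mem measurableSet_Ico) _)
  have herg : Ergodic (towerMap α) towerMeasure := (ergodic_towerMap hα).smul_measure _
  have hvol : ∀ C : Set ℝ, MeasurableSet C → volume (chart ⁻¹' C) = towerMeasure C :=
    fun C hC => hc.measure_preimage hC.nullMeasurableSet
  have hlift : ∀ A : Set (Icc (0 : ℝ) 1), chart ⁻¹' (chartInv ⁻¹' A) = A := fun A => by
    rw [← preimage_comp, show chartInv ∘ chart = id from funext chartInv_chart, preimage_id]
  have hpre : ∀ (j : ℕ) (C D : Set ℝ), T^[j] ⁻¹' (chart ⁻¹' C) ∩ chart ⁻¹' D =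
      chart ⁻¹' ((towerMap α)^[j] ⁻¹' C ∩ D) := fun j C D => by
    rw [preimage_inter, ← preimage_comp, ← preimage_comp, (hcT.iterate_right j).comp_eq]
  have hTj : ∀ (j : ℕ) {C : Set ℝ}, MeasurableSet C → MeasurableSet ((towerMap α)^[j] ⁻¹' C) :=
    fun j C hC => ((measurable_towerMap α).iterate j) hC
  -- the powers with exponents `q n + m n + 1` converge weakly to the average of the identity
  -- and the map itself
  have hlim : ∀ A B : Set ℝ, MeasurableSet A → MeasurableSet B →
      Tendsto (fun n => towerMeasure.real ((towerMap α)^[q n + m n + 1] ⁻¹' A ∩ B)) atTop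
        (𝓝 ((towerMeasure.real (A ∩ B) + towerMeasure.real (towerMap α ⁻¹' A ∩ B)) / 2)) := by
    intro A B hA hB
    simp only [towerMeasure_real]
    rw [← mul_add, mul_div_assoc]
    exact (tendsto_towerMap_iterate hm hpq hq hε hA hB).const_mul _
  refine ⟨T, S, hT, hS, ?_, ?_, ?_, ?_, ?_⟩
  · filter_upwards [hae] with x hx
    change chartInv (towerInv α (chart (T x))) = x
    rw [hcT x, towerInv_towerMap α hx, chartInv_chart]
  · filter_upwards [hae] with x hx
    change chartInv (towerMap α (chart (S x))) = x
    rw [hcS x, towerMap_towerInv α hx, chartInv_chart]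
  · intro A hA
    have hA' := measurable_chartInv hA
    have h := hpre 1 (chartInv ⁻¹' A) univ
    simp only [Function.iterate_one, preimage_univ, inter_univ] at h
    rw [← hlift A, h, hvol _ hA', hvol _ (measurable_towerMap α hA')]
    exact herg.toMeasurePreserving.measure_preimage hA'.nullMeasurableSet
  · intro A B hA hB
    have hA' := measurable_chartInv hA
    have hB' := measurable_chartInv hB
    have h := weakly_mixing_of_weak_limit herg (fun n => q n + m n + 1) hlim hA' hB'
    refine h.congr fun n => ?_
    congr 1
    refine Finset.sum_congr rfl fun j _ => ?_
    conv_rhs => rw [← hlift A, ← hlift B]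
    rw [hpre, hvol _ ((hTj j hA').inter hB'), hvol _ hA', hvol _ hB']
    rfl
  · have hJ : MeasurableSet (Ico (1 : ℝ) (3 / 2)) := measurableSet_Ico
    have hμJ : towerMeasure.real (Ico (1 : ℝ) (3 / 2)) = 1 / 3 := by
      rw [towerMeasure_real, measureReal_restrict_apply hJ,
        inter_eq_left.2 (Ico_subset_Ico_left zero_le_one), Real.volume_real_Ico_of_le (by norm_num)]
      norm_num
    refine ⟨chart ⁻¹' Ico 1 (3 / 2), chart ⁻¹' Ico 1 (3 / 2), hc.measurable hJ, hc.measurable hJ,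
      fun hmix => ?_⟩
    have hh : Tendsto (fun n => q n + m n + 1) atTop atTop :=
      tendsto_atTop_mono (fun n => by omega) hq
    have h1 := hmix.comp hh
    simp only [Function.comp_def, hpre] at h1
    rw [hvol _ hJ] at h1
    simp only [hvol _ ((hTj _ hJ).inter hJ)] at h1
    have h2 := (ENNReal.tendsto_toReal (ENNReal.mul_ne_top (measure_ne_top towerMeasure _)
      (measure_ne_top towerMeasure _))).comp h1
    rw [ENNReal.toReal_mul] at h2
    have h3 := tendsto_nhds_unique h2 (hlim _ _ hJ hJ)
    simp only [← measureReal_def] at h3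
    rw [inter_self, hμJ] at h3
    have h4 : 0 ≤ towerMeasure.real (towerMap α ⁻¹' Ico 1 (3 / 2) ∩ Ico 1 (3 / 2)) :=
      measureReal_nonneg
    -- mixing would make the limit `(1/3)^2 = 1/9`, but it is at least `(1/3)/2 = 1/6`
    linarith
end

section
/- There exists an automorphism U of T² that is weakly mixing but not strongly mixing: for all Borel sets A, B ⊆ T², (1/n) ∑_{j=0}^{n−1} [μ(U^{−j}(A) ∩ B) − μ(A)μ(B)]² → 0 as n → ∞, yet there exist Borel sets A, B ⊆ T² for which μ(U^{−n}(A) ∩ B) does not converge to μ(A)μ(B). -/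
/-!
The automorphism is found by a Baire category argument in the style of Anosov and Katok. Consider
the periodic rotations `(x, y) ↦ (x + α, y)` conjugated by measure-preserving homeomorphisms of the
torus, paired with their inverses, and let `X` be the closure of this set (`orb`) in the complete
metric space `C(T², T²) × C(T², T²)`. Every pair in `X` consists of mutually inverse
measure-preserving homeomorphisms. A generic element `U` of `X` has two properties
(`exists_generic`).

* It is rigid: its iterates return uniformly close to the identity at arbitrarily large times.
  This is a countable intersection of open conditions, each satisfied on `orb` because its
  elements are periodic. A rigid map keeps two distant balls apart at its return times, so it is
  not strongly mixing (`not_strongMixing_of_rigidSet`).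
* It is mixing along some sequence of times. This is again a countable intersection of open
  conditions, and the point is their density (`orb_subset_closure_mixSet`). If `q α = 0`, the map
  `(x, y) ↦ (x, y + ‖q x‖)` followed by `(x, y) ↦ (x + M y, y)` commutes with the rotation by `α`,
  so it may be inserted into the conjugation for free. Conjugating by it the rotation by
  `1 / (2 q)` gives a map under which distinct characters of frequency small compared to `M` are
  uncorrelated, and every nontrivial one is uncorrelated with its own image, because the increment
  of the tent wave `‖q x‖` over half a period is uniformly distributed (`corr_mixer`). Rotations by
  angles near `α` having `1 / (2 q)` as a multiple therefore give the required approximations.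

Mixing along a sequence implies weak mixing (`tendsto_cesaro_of_subseq`): for the orbit `v j` of a
centred indicator under the Koopman operator, choose times `m 0, ..., m (L - 1)` with the `v (m i)`
almost orthogonal. By stationarity the `v (j + m i)` are almost orthogonal for every `j`, so
Bessel's inequality bounds `∑ i, |⟪v (j + m i), g⟫|²` independently of `j` and `L`, and averaging
over `j` bounds the limit superior of the Cesàro means of `|⟪v j, g⟫|²` by a constant over `L`.
-/

open MeasureTheory Filter Set
open scoped ENNReal symmDiff

noncomputable section

instance fact01 : Fact ((0:ℝ) < 1) := ⟨one_pos⟩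

/-- The two-dimensional torus `[0,1)²` with coordinatewise addition mod 1. -/
abbrev T2 : Type := AddCircle (1:ℝ) × AddCircle (1:ℝ)

/-- The canonical representative in `[0,1)` of a point of the circle. -/
noncomputable def rep (x : AddCircle (1:ℝ)) : ℝ := ((AddCircle.equivIco 1 0) x : ℝ)

/-- The point of the torus with coordinates `a`, `b` (mod 1). -/
noncomputable def tv (a b : ℝ) : T2 := ((a : AddCircle (1:ℝ)), (b : AddCircle (1:ℝ)))

open Classical in
/-- The Chacon-type maps `U_n` on the torus. -/
noncomputable def chaconU : ℕ → T2 → T2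
  | 0 => id
  | 1 => fun x =>
      if 0 ≤ rep x.1 ∧ rep x.1 < 1/2 ∧ 1/2 ≤ rep x.2 ∧ rep x.2 < 1 then x + tv (1/2) 0
      else if 1/2 ≤ rep x.1 ∧ rep x.1 < 1 ∧ 1/2 ≤ rep x.2 ∧ rep x.2 < 1 then
        x + tv (-(1/2)) (-(1/2))
      else if 0 ≤ rep x.1 ∧ rep x.1 < 1/2 ∧ 0 ≤ rep x.2 ∧ rep x.2 < 1/2 then x + tv 0 (1/2)
      else x
  | (n+2) => fun x =>
      let s : ℝ := 1 / 2 ^ (n+2)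
      let a := rep x.1
      let b := rep x.2
      if 1-4*s ≤ a ∧ a < 1-3*s ∧ s ≤ b ∧ b < 2*s then x + tv (5*s-1) (1-2*s)
      else if 1-3*s ≤ a ∧ a < 1-2*s ∧ s ≤ b ∧ b < 2*s then x + tv s 0
      else if 1-4*s ≤ a ∧ a < 1-3*s ∧ 0 ≤ b ∧ b < s then x + tv (3*s) s
      else if 1-3*s ≤ a ∧ a < 1-2*s ∧ 0 ≤ b ∧ b < s then x + tv s 0
      else if 1-2*s ≤ a ∧ a < 1 ∧ s ≤ b ∧ b < 2*s then x + tv (2*s-1) (1-3*s)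
      else if 1-2*s ≤ a ∧ a < 1-s ∧ 0 ≤ b ∧ b < s then x + tv (2*s-1) (1-s)
      else if 1-s ≤ a ∧ a < 1 ∧ 0 ≤ b ∧ b < s then x
      else chaconU (n+1) x

/-- An automorphism of the torus: measurable, bijective up to null sets with measurable
inverse, and measure-preserving. -/
def IsAutomorphism (U : T2 → T2) : Prop :=
  Measurable U ∧ ∃ V : T2 → T2, Measurable V ∧
    (∀ᵐ x ∂(volume : Measure T2), V (U x) = x) ∧
    (∀ᵐ x ∂(volume : Measure T2), U (V x) = x) ∧
    ∀ A : Set T2, MeasurableSet A → volume (U ⁻¹' A) = volume A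



/-! ### Hilbert space lemmas -/

section HilbertSpace

variable {E : Type*} [NormedAddCommGroup E] [InnerProductSpace ℂ E]

/-- Bessel's inequality for almost orthogonal vectors. -/
lemma sum_norm_inner_sq_le (s : Finset ℕ) (v : ℕ → E) {C δ : ℝ} (hδ : 0 ≤ δ)
    (hC0 : 0 ≤ C) (hC : ∀ i ∈ s, ‖v i‖ ^ 2 ≤ C)
    (hd : ∀ i ∈ s, ∀ j ∈ s, i ≠ j → ‖inner ℂ (v i) (v j)‖ ≤ δ) (g : E) :
    ∑ i ∈ s, ‖inner ℂ (v i) g‖ ^ 2 ≤ ‖g‖ ^ 2 * (C + s.card * δ) := by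
  set c : ℕ → ℂ := fun i => inner ℂ (v i) g with hc
  set S : ℝ := ∑ i ∈ s, ‖c i‖ ^ 2 with hS
  have hS0 : 0 ≤ S := Finset.sum_nonneg fun _ _ => sq_nonneg _
  rcases hS0.eq_or_lt with h0 | hSpos
  · rw [← h0]
    positivity
  set w : E := ∑ i ∈ s, c i • v i with hw
  have h1 : inner ℂ w g = (S : ℂ) := by
    rw [hw, sum_inner, hS]
    push_cast
    refine Finset.sum_congr rfl fun i _ => ?_
    rw [inner_smul_left]
    exact Complex.conj_mul' _
  have h2 : S ≤ ‖w‖ * ‖g‖ := by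
    have := norm_inner_le_norm (𝕜 := ℂ) w g
    rw [h1, Complex.norm_real, Real.norm_of_nonneg hS0] at this
    exact this
  have h3 : ‖w‖ ^ 2 ≤ S * (C + s.card * δ) := by
    have e1 : ‖w‖ ^ 2 = ‖inner ℂ w w‖ := by
      rw [inner_self_eq_norm_sq_to_K]; simp
    rw [e1, hw, sum_inner]
    calc ‖∑ i ∈ s, inner ℂ (c i • v i) (∑ j ∈ s, c j • v j)‖
        ≤ ∑ i ∈ s, ∑ j ∈ s, ‖c i‖ * ‖c j‖ * ((if i = j then C else 0) + δ) := by
          refine (norm_sum_le _ _).trans (Finset.sum_le_sum fun i hi => ?_)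
          rw [inner_sum]
          refine (norm_sum_le _ _).trans (Finset.sum_le_sum fun j hj => ?_)
          rw [inner_smul_left, inner_smul_right, norm_mul, norm_mul, RCLike.norm_conj, ← mul_assoc]
          gcongr
          split_ifs with hij
          · subst hij
            rw [inner_self_eq_norm_sq_to_K]
            simp only [Complex.coe_algebraMap, norm_pow, Complex.norm_real, norm_norm]
            linarith [hC i hi]
          · linarith [hd i hi j hj hij]
      _ = S * C + δ * (∑ i ∈ s, ‖c i‖) ^ 2 := by
          simp only [mul_add, Finset.sum_add_distrib]
          congr 1
          · rw [hS, Finset.sum_mul]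
            refine Finset.sum_congr rfl fun i hi => ?_
            simp [hi, sq]
          · rw [sq, Finset.sum_mul_sum, Finset.mul_sum]
            refine Finset.sum_congr rfl fun i hi => ?_
            rw [Finset.mul_sum]
            refine Finset.sum_congr rfl fun j hj => by ring
      _ ≤ S * C + δ * (s.card * S) := by
          gcongr
          exact sq_sum_le_card_mul_sum_sq
      _ = _ := by ring
  have h4 : S ^ 2 ≤ S * (‖g‖ ^ 2 * (C + s.card * δ)) := by
    calc S ^ 2 ≤ (‖w‖ * ‖g‖) ^ 2 := by gcongr
      _ = ‖w‖ ^ 2 * ‖g‖ ^ 2 := by ring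
      _ ≤ (S * (C + s.card * δ)) * ‖g‖ ^ 2 := by gcongr
      _ = _ := by ring
  rw [sq] at h4
  exact le_of_mul_le_mul_left h4 hSpos

/-- If a stationary sequence of vectors has a subsequence converging weakly to `0`, then its
squared correlations with any vector vanish in Cesàro mean: spreading the average over many
almost orthogonal translates makes Bessel's inequality effective. -/
lemma tendsto_cesaro_of_subseq (v : ℕ → E)
    (hv : ∀ j m l, inner ℂ (v (j + m)) (v (j + l)) = inner ℂ (v m) (v l))
    (n : ℕ → ℕ) (hn : ∀ g, Tendsto (fun k => inner ℂ g (v (n k))) atTop (nhds 0)) (g : E) :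
    Tendsto (fun N : ℕ => (1 / N : ℝ) * ∑ j ∈ Finset.range N, ‖inner ℂ (v j) g‖ ^ 2)
      atTop (nhds 0) := by
  have hnorm : ∀ j, ‖v j‖ = ‖v 0‖ := by
    intro j
    have := hv j 0 0
    rw [add_zero, inner_self_eq_norm_sq_to_K, inner_self_eq_norm_sq_to_K] at this
    have h2 : ‖v j‖ ^ 2 = ‖v 0‖ ^ 2 := by exact_mod_cast this
    exact (pow_left_inj₀ (norm_nonneg _) (norm_nonneg _) two_ne_zero).1 h2
  set a : ℕ → ℝ := fun j => ‖inner ℂ (v j) g‖ ^ 2 with ha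
  have ha0 : ∀ j, 0 ≤ a j := fun j => sq_nonneg _
  set B : ℝ := ‖v 0‖ ^ 2 * ‖g‖ ^ 2 with hB
  have hB0 : 0 ≤ B := by positivity
  have haB : ∀ j, a j ≤ B := by
    intro j
    have := norm_inner_le_norm (𝕜 := ℂ) (v j) g
    rw [hnorm] at this
    calc a j ≤ (‖v 0‖ * ‖g‖) ^ 2 := by simp only [ha]; gcongr
      _ = B := by ring
  -- `L` times a partial sum is at most `N * D`, up to a constant depending only on `L`; hence
  -- the Cesàro means are asymptotically at most `D / L`
  set D : ℝ := ‖g‖ ^ 2 * (‖v 0‖ ^ 2 + 1) with hD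
  have hD0 : 0 ≤ D := by positivity
  have key : ∀ L : ℕ, 0 < L → ∃ R : ℝ, ∀ N : ℕ, L * ∑ j ∈ Finset.range N, a j ≤ N * D + R := by
    intro L hL
    have hLpos : (0 : ℝ) < L := by exact_mod_cast hL
    obtain ⟨m, -, hm⟩ := exists_seq_of_forall_finset_exists (fun _ : ℕ => True)
      (fun x y => ‖inner ℂ (v x) (v y)‖ ≤ 1 / L) (by
        intro s _
        have : ∀ᶠ k in atTop, ∀ x ∈ s, ‖inner ℂ (v x) (v (n k))‖ ≤ 1 / L := by
          rw [Filter.eventually_all_finset]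
          intro x _
          have h := (hn (v x)).norm
          rw [norm_zero] at h
          exact (h.eventually_lt_const (by positivity)).mono fun k hk => hk.le
        obtain ⟨k, hk⟩ := this.exists
        exact ⟨n k, trivial, hk⟩)
    refine ⟨∑ i ∈ Finset.range L, m i * B, fun N => ?_⟩
    have bes : ∀ j, ∑ i ∈ Finset.range L, a (j + m i) ≤ D := by
      intro j
      have := sum_norm_inner_sq_le (Finset.range L) (fun i => v (j + m i)) (C := ‖v 0‖ ^ 2)
        (δ := 1 / L) (by positivity) (by positivity) (fun i _ => by rw [hnorm]) (by
          intro i _ l _ hil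
          rw [hv]
          rcases lt_or_gt_of_ne hil with h | h
          · exact hm _ _ h
          · rw [norm_inner_symm]; exact hm _ _ h) g
      rw [Finset.card_range, mul_one_div_cancel hLpos.ne'] at this
      exact this
    have shift : ∀ i, ∑ j ∈ Finset.range N, a j ≤ ∑ j ∈ Finset.range N, a (j + m i) + m i * B := by
      intro i
      calc ∑ j ∈ Finset.range N, a j ≤ ∑ j ∈ Finset.range (m i + N), a j :=
            Finset.sum_le_sum_of_subset_of_nonneg (Finset.range_mono (by omega))
              fun _ _ _ => ha0 _
        _ = ∑ j ∈ Finset.range (m i), a j + ∑ j ∈ Finset.range N, a (m i + j) :=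
            Finset.sum_range_add _ _ _
        _ ≤ m i * B + ∑ j ∈ Finset.range N, a (m i + j) := by
            gcongr
            calc ∑ j ∈ Finset.range (m i), a j ≤ ∑ j ∈ Finset.range (m i), B :=
                  Finset.sum_le_sum fun j _ => haB j
              _ = m i * B := by simp
        _ = _ := by rw [add_comm]; simp only [add_comm]
    calc L * ∑ j ∈ Finset.range N, a j = ∑ i ∈ Finset.range L, ∑ j ∈ Finset.range N, a j := by simp
      _ ≤ ∑ i ∈ Finset.range L, (∑ j ∈ Finset.range N, a (j + m i) + m i * B) :=
          Finset.sum_le_sum fun i _ => shift i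
      _ = ∑ j ∈ Finset.range N, ∑ i ∈ Finset.range L, a (j + m i)
            + ∑ i ∈ Finset.range L, m i * B := by
          rw [Finset.sum_add_distrib, Finset.sum_comm]
      _ ≤ ∑ j ∈ Finset.range N, D + ∑ i ∈ Finset.range L, m i * B := by
          gcongr with j; exact bes j
      _ = _ := by simp
  rw [Metric.tendsto_atTop]
  intro ε hε
  obtain ⟨L, hL⟩ := exists_nat_gt (2 * D / ε)
  have hLpos : (0 : ℝ) < L := lt_of_le_of_lt (by positivity) hL
  obtain ⟨R, hR⟩ := key L (by exact_mod_cast hLpos)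
  obtain ⟨N₀, hN₀⟩ := exists_nat_gt (2 * |R| / (L * ε))
  refine ⟨N₀ + 1, fun N hN => ?_⟩
  have hNN : (N₀ : ℝ) + 1 ≤ N := by exact_mod_cast hN
  have hNpos : (0 : ℝ) < N := by have : (0 : ℝ) ≤ N₀ := by positivity
                                 linarith
  have hs0 : 0 ≤ ∑ j ∈ Finset.range N, a j := Finset.sum_nonneg fun j _ => ha0 j
  rw [Real.dist_eq, sub_zero, abs_of_nonneg (by positivity), one_div, inv_mul_lt_iff₀ hNpos]
  have i1 : 2 * D < ε * L := by rw [div_lt_iff₀ hε] at hL; linarith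
  have i2 : 2 * |R| < N * (L * ε) := by
    rw [div_lt_iff₀ (by positivity)] at hN₀
    have : (N₀ : ℝ) * (L * ε) ≤ N * (L * ε) := by gcongr; linarith
    linarith
  have i3 := hR N
  have i4 := le_abs_self R
  have i5 : N * (2 * D) < N * (ε * L) := by gcongr
  have : L * ∑ j ∈ Finset.range N, a j < L * (N * ε) := by linarith
  exact lt_of_mul_lt_mul_left this hLpos.le

/-- Weak convergence of isometries to the rank-one operator `f ↦ ⟪e, f⟫ e` needs to be tested
only on a set with dense span. -/
lemma tendsto_inner_of_dense {S : Set E}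
    (hS : (Submodule.span ℂ S).topologicalClosure = ⊤) (e : E) (K : ℕ → E →ₗᵢ[ℂ] E)
    (h : ∀ f ∈ S, ∀ g ∈ S,
      Tendsto (fun k => inner ℂ g (K k f)) atTop (nhds (inner ℂ g e * inner ℂ e f)))
    (f g : E) :
    Tendsto (fun k => inner ℂ g (K k f)) atTop (nhds (inner ℂ g e * inner ℂ e f)) := by
  have hdense : Dense (Submodule.span ℂ S : Set E) := by
    rw [← Submodule.dense_iff_topologicalClosure_eq_top] at hS; exact hS
  have s1 : ∀ f ∈ Submodule.span ℂ S, ∀ g ∈ Submodule.span ℂ S,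
      Tendsto (fun k => inner ℂ g (K k f)) atTop (nhds (inner ℂ g e * inner ℂ e f)) := by
    intro f hf
    induction hf using Submodule.span_induction with
    | mem f hf =>
      intro g hg
      induction hg using Submodule.span_induction with
      | mem g hg => exact h f hf g hg
      | zero => simp
      | add g₁ g₂ _ _ h₁ h₂ => simpa [inner_add_left, add_mul] using h₁.add h₂
      | smul c g _ h₁ =>
        simp only [inner_smul_left, mul_assoc]
        exact h₁.const_mul _
    | zero => simp
    | add f₁ f₂ _ _ h₁ h₂ =>
      intro g hg
      simpa [inner_add_right, mul_add] using (h₁ g hg).add (h₂ g hg)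
    | smul c f _ h₁ =>
      intro g hg
      simpa [inner_smul_right, mul_left_comm] using (h₁ g hg).const_mul c
  have s2 : ∀ f, ∀ g ∈ Submodule.span ℂ S,
      Tendsto (fun k => inner ℂ g (K k f)) atTop (nhds (inner ℂ g e * inner ℂ e f)) := by
    intro f g hg
    have eq : UniformEquicontinuous (fun k f => inner ℂ g (K k f)) :=
      LipschitzWith.uniformEquicontinuous _ ‖g‖₊ fun k => LipschitzWith.of_dist_le_mul fun x y => by
        rw [dist_eq_norm, dist_eq_norm, ← inner_sub_right, ← map_sub]
        exact (norm_inner_le_norm _ _).trans_eq (by rw [(K k).norm_map]; rfl)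
    exact (eq.equicontinuous f).tendsto_of_mem_closure (f := fun f => inner ℂ g e * inner ℂ e f)
      (Continuous.tendsto (by fun_prop) f |>.mono_left inf_le_left)
      (fun f hf => s1 f hf g hg) (hdense f)
  have eq : UniformEquicontinuous (fun k g => inner ℂ g (K k f)) :=
    LipschitzWith.uniformEquicontinuous _ ‖f‖₊ fun k => LipschitzWith.of_dist_le_mul fun x y => by
      rw [dist_eq_norm, dist_eq_norm, ← inner_sub_left]
      exact (norm_inner_le_norm _ _).trans_eq (by rw [(K k).norm_map, mul_comm]; rfl)
  exact (eq.equicontinuous g).tendsto_of_mem_closure (f := fun g => inner ℂ g e * inner ℂ e f)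
    (Continuous.tendsto (by fun_prop) g |>.mono_left inf_le_left)
    (fun g hg => s2 f g hg) (hdense g)

end HilbertSpace

/-! ### Characters of the torus -/

instance isProbabilityMeasure_circle :
    IsProbabilityMeasure (volume : Measure (AddCircle (1 : ℝ))) := ⟨by simp⟩

/-- The character `(x, y) ↦ exp (2πi (a x + b y))` of the torus. -/
def ch (a b : ℤ) : C(T2, ℂ) where
  toFun z := fourier a z.1 * fourier b z.2
  continuous_toFun := by fun_prop

lemma ch_apply (a b : ℤ) (z : T2) : ch a b z = fourier a z.1 * fourier b z.2 := rfl

lemma fourier_add_point (n : ℤ) (x y : AddCircle (1 : ℝ)) :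
    fourier n (x + y) = fourier n x * fourier n y := by
  simp [fourier_apply, smul_add, AddCircle.toCircle_add]

lemma fourier_zsmul_point (n m : ℤ) (x : AddCircle (1 : ℝ)) :
    fourier n (m • x) = fourier (n * m) x := by
  simp [fourier_apply, mul_smul]

/-- The trigonometric polynomials, as a star subalgebra of `C(T2, ℂ)`. -/
def trigAlgebra : StarSubalgebra ℂ C(T2, ℂ) where
  toSubalgebra := Algebra.adjoin ℂ (range fun p : ℤ × ℤ => ch p.1 p.2)
  star_mem' := by
    change Algebra.adjoin ℂ (range fun p : ℤ × ℤ => ch p.1 p.2) ≤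
      star (Algebra.adjoin ℂ (range fun p : ℤ × ℤ => ch p.1 p.2))
    refine Algebra.adjoin_le ?_
    rintro - ⟨p, rfl⟩
    refine Algebra.subset_adjoin ⟨(-p.1, -p.2), ?_⟩
    ext z
    simp only [ch_apply, fourier_neg, ContinuousMap.star_apply, star_mul', RCLike.star_def]

lemma trigAlgebra_coe : Subalgebra.toSubmodule trigAlgebra.toSubalgebra =
    Submodule.span ℂ (range fun p : ℤ × ℤ => ch p.1 p.2) := by
  apply Algebra.adjoin_eq_span_of_subset
  refine Subset.trans ?_ Submodule.subset_span
  intro x hx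
  refine Submonoid.closure_induction (fun _ => id) ⟨0, ?_⟩ ?_ hx
  · ext z
    simp [ch]
  · rintro _ _ _ _ ⟨m, rfl⟩ ⟨n, rfl⟩
    refine ⟨m + n, ?_⟩
    ext z
    simp only [ch_apply, Prod.fst_add, Prod.snd_add, fourier_add, ContinuousMap.mul_apply]
    ring

lemma span_ch_closure : (Submodule.span ℂ (range fun p : ℤ × ℤ => ch p.1 p.2)).topologicalClosure
    = ⊤ := by
  have hsep : trigAlgebra.SeparatesPoints := by
    intro x y hxy
    have inj : ∀ u v : AddCircle (1 : ℝ), fourier 1 u = fourier 1 v → u = v := by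
      intro u v h
      rw [fourier_one, fourier_one] at h
      exact AddCircle.injective_toCircle one_ne_zero (Circle.ext h)
    by_cases h1 : x.1 = y.1
    · refine ⟨_, ⟨ch 0 1, Algebra.subset_adjoin ⟨(0, 1), rfl⟩, rfl⟩, fun h => hxy ?_⟩
      refine Prod.ext h1 (inj _ _ ?_)
      simpa only [ch_apply, fourier_zero, one_mul] using h
    · refine ⟨_, ⟨ch 1 0, Algebra.subset_adjoin ⟨(1, 0), rfl⟩, rfl⟩, fun h => h1 (inj _ _ ?_)⟩
      simpa only [ch_apply, fourier_zero, mul_one] using h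
  have := ContinuousMap.starSubalgebra_topologicalClosure_eq_top_of_separatesPoints _ hsep
  rw [← trigAlgebra_coe]
  exact congr_arg (Subalgebra.toSubmodule <| StarSubalgebra.toSubalgebra ·) this

/-- The Hilbert space `L²(T²)`. -/
abbrev L2T : Type := Lp ℂ 2 (volume : Measure T2)

/-- The inclusion `C(T²) → L²(T²)`. -/
abbrev toL2 : C(T2, ℂ) →L[ℂ] L2T := ContinuousMap.toLp (E := ℂ) 2 volume ℂ

lemma span_toL2_ch_closure :
    (Submodule.span ℂ (range fun p : ℤ × ℤ => toL2 (ch p.1 p.2))).topologicalClosure = ⊤ := by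
  have := (ContinuousMap.toLp_denseRange ℂ (volume : Measure T2) ℂ
    (p := 2) (by simp)).topologicalClosure_map_submodule span_ch_closure
  rw [Submodule.map_span, ← range_comp] at this
  exact this

/-- The Koopman operator of a measure-preserving map. -/
abbrev koop (W : T2 → T2) (hW : MeasurePreserving W) : L2T →ₗᵢ[ℂ] L2T :=
  Lp.compMeasurePreservingₗᵢ ℂ W hW

lemma inner_toL2 (F G : C(T2, ℂ)) :
    inner ℂ (toL2 G) (toL2 F) = ∫ z, F z * (starRingEnd ℂ) (G z) :=
  ContinuousMap.inner_toLp (volume : Measure T2) G F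

lemma koop_toL2 (W : C(T2, T2)) (hW : MeasurePreserving W) (F : C(T2, ℂ)) :
    koop W hW (toL2 F) = toL2 (F.comp W) := by
  apply Lp.ext
  refine (Lp.coeFn_compMeasurePreserving _ hW).trans ?_
  refine (hW.quasiMeasurePreserving.ae_eq_comp
    (ContinuousMap.coeFn_toLp (volume : Measure T2) F)).trans ?_
  exact (ContinuousMap.coeFn_toLp (volume : Measure T2) (F.comp W)).symm

lemma inner_koop_toL2 (W : C(T2, T2)) (hW : MeasurePreserving W) (F G : C(T2, ℂ)) :
    inner ℂ (toL2 G) (koop W hW (toL2 F)) = ∫ z, F (W z) * (starRingEnd ℂ) (G z) := by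
  rw [koop_toL2, inner_toL2]
  rfl

lemma integral_fourier_eq (n : ℤ) :
    ∫ x : AddCircle (1 : ℝ), fourier n x = if n = 0 then 1 else 0 := by
  split_ifs with h
  · subst h; simp
  · exact integral_eq_zero_of_add_right_eq_neg (fourier_add_half_inv_index h one_pos)

lemma integral_ch (a b : ℤ) : ∫ z, ch a b z = if a = 0 ∧ b = 0 then 1 else 0 := by
  simp only [ch_apply]
  rw [Measure.volume_eq_prod, integral_prod_mul (fun x => fourier a x) (fun y => fourier b y),
    integral_fourier_eq, integral_fourier_eq]
  split_ifs <;> simp_all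

/-- Mixing along a sequence of continuous measure-preserving maps can be tested on characters. -/
lemma tendsto_koop_of_ch (W : ℕ → C(T2, T2)) (hW : ∀ k, MeasurePreserving (W k))
    (h : ∀ a b c d : ℤ, Tendsto (fun k => ∫ z, ch a b (W k z) * (starRingEnd ℂ) (ch c d z)) atTop
      (nhds (if a = 0 ∧ b = 0 ∧ c = 0 ∧ d = 0 then 1 else 0))) (f g : L2T) :
    Tendsto (fun k => inner ℂ g (koop (W k) (hW k) f)) atTop
      (nhds (inner ℂ g (toL2 1) * inner ℂ (toL2 1) f)) := by
  refine tendsto_inner_of_dense span_toL2_ch_closure (toL2 1) (fun k => koop (W k) (hW k)) ?_ f g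
  rintro - ⟨⟨a, b⟩, rfl⟩ - ⟨⟨c, d⟩, rfl⟩
  simp only [inner_koop_toL2]
  convert h a b c d using 2
  have e1 : inner ℂ (toL2 (ch c d)) (toL2 1) = if c = 0 ∧ d = 0 then (1 : ℂ) else 0 := by
    rw [inner_toL2]
    simp only [ContinuousMap.one_apply, one_mul]
    rw [integral_conj, integral_ch]
    split_ifs <;> simp
  have e2 : inner ℂ (toL2 1) (toL2 (ch a b)) = if a = 0 ∧ b = 0 then (1 : ℂ) else 0 := by
    rw [inner_toL2]
    simp only [ContinuousMap.one_apply, map_one, mul_one]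
    rw [integral_ch]
  rw [e1, e2]
  split_ifs <;> simp_all

/-! ### Rotations, shears and the key correlation -/

/-- The rotation of the first coordinate by `α`. -/
def rot (α : AddCircle (1 : ℝ)) : T2 ≃ₜ T2 := Homeomorph.addRight ((α, 0) : T2)

/-- The vertical shear `(x, y) ↦ (x, y + ‖q x‖)`, where `‖u‖` is the distance from `u` to the
nearest integer. It commutes with rotations by `q`-torsion points. -/
def shearY (q : ℕ) : T2 ≃ₜ T2 where
  toFun z := (z.1, z.2 + ((‖q • z.1‖ : ℝ) : AddCircle (1 : ℝ)))
  invFun z := (z.1, z.2 - ((‖q • z.1‖ : ℝ) : AddCircle (1 : ℝ)))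
  left_inv z := by simp
  right_inv z := by simp
  continuous_toFun := by
    have : Continuous fun z : T2 => ((‖q • z.1‖ : ℝ) : AddCircle (1 : ℝ)) :=
      (AddCircle.continuous_mk' 1).comp (by fun_prop)
    fun_prop
  continuous_invFun := by
    have : Continuous fun z : T2 => ((‖q • z.1‖ : ℝ) : AddCircle (1 : ℝ)) :=
      (AddCircle.continuous_mk' 1).comp (by fun_prop)
    fun_prop

/-- The horizontal shear `(x, y) ↦ (x + M y, y)`. -/
def shearX (M : ℤ) : T2 ≃ₜ T2 where
  toFun z := (z.1 + M • z.2, z.2)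
  invFun z := (z.1 - M • z.2, z.2)
  left_inv z := by simp
  right_inv z := by simp
  continuous_toFun := by fun_prop
  continuous_invFun := by fun_prop

/-- The conjugating homeomorphism: a vertical shear followed by a horizontal one. -/
def shear (q : ℕ) (M : ℤ) : T2 ≃ₜ T2 := (shearY q).trans (shearX M)

lemma rot_apply (α : AddCircle (1 : ℝ)) (z : T2) : rot α z = (z.1 + α, z.2) := by
  simp [rot, Prod.ext_iff]

lemma shear_apply (q : ℕ) (M : ℤ) (z : T2) : shear q M z =
    (z.1 + M • (z.2 + ((‖q • z.1‖ : ℝ) : AddCircle (1 : ℝ))),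
      z.2 + ((‖q • z.1‖ : ℝ) : AddCircle (1 : ℝ))) := rfl

lemma measurePreserving_rot (α : AddCircle (1 : ℝ)) : MeasurePreserving (rot α) := by
  have h := (measurePreserving_add_right (volume : Measure (AddCircle (1 : ℝ))) α).prod
    (MeasurePreserving.id (volume : Measure (AddCircle (1 : ℝ))))
  have e : (rot α : T2 → T2) = Prod.map (· + α) id := funext fun z => rot_apply α z
  rw [e]
  exact h

lemma measurePreserving_shearY (q : ℕ) : MeasurePreserving (shearY q) := by
  refine MeasurePreserving.skew_product (f := id) (μa := volume) (μc := volume)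
    (g := fun x y : AddCircle (1 : ℝ) => y + ((‖q • x‖ : ℝ) : AddCircle (1 : ℝ)))
    (MeasurePreserving.id _) ?_ (ae_of_all _ fun x => ?_)
  · have : Continuous fun z : T2 => ((‖q • z.1‖ : ℝ) : AddCircle (1 : ℝ)) :=
      (AddCircle.continuous_mk' 1).comp (by fun_prop)
    exact (continuous_snd.add this).measurable
  · exact (measurePreserving_add_right volume _).map_eq

lemma measurePreserving_shearX (M : ℤ) : MeasurePreserving (shearX M) := by
  have h : MeasurePreserving (fun z : T2 => (z.1, z.2 + M • z.1)) := by
    refine MeasurePreserving.skew_product (f := id) (μa := volume) (μc := volume)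
      (g := fun x y : AddCircle (1 : ℝ) => y + M • x)
      (MeasurePreserving.id _) ?_ (ae_of_all _ fun x => ?_)
    · exact Continuous.measurable (by fun_prop)
    · exact (measurePreserving_add_right volume _).map_eq
  have hs : MeasurePreserving (Prod.swap : T2 → T2) := Measure.measurePreserving_swap
  exact hs.comp (h.comp hs)

lemma measurePreserving_shear (q : ℕ) (M : ℤ) : MeasurePreserving (shear q M) :=
  (measurePreserving_shearX M).comp (measurePreserving_shearY q)

lemma shear_rot_comm (q : ℕ) (M : ℤ) (α : AddCircle (1 : ℝ)) (hα : q • α = 0) (z : T2) :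
    shear q M (rot α z) = rot α (shear q M z) := by
  simp only [rot_apply, shear_apply, smul_add, hα, add_zero]
  ext1
  · dsimp only; abel
  · rfl

lemma norm_add_half (u : AddCircle (1 : ℝ)) :
    ‖u + ((1 / 2 : ℝ) : AddCircle (1 : ℝ))‖ = 1 / 2 - ‖u‖ := by
  obtain ⟨x, hx, rfl⟩ : ∃ x : ℝ, x ∈ Ico (-(1 / 2) : ℝ) (1 / 2) ∧ (x : AddCircle (1 : ℝ)) = u := by
    obtain ⟨x, hx⟩ := (AddCircle.equivIco (1 : ℝ) (-(1 / 2))).symm.surjective u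
    exact ⟨x, ⟨x.2.1, x.2.2.trans_eq (by norm_num)⟩, hx⟩
  have nrm : ∀ y : ℝ, |y| ≤ 1 / 2 → ‖(y : AddCircle (1 : ℝ))‖ = |y| := fun y hy =>
    (AddCircle.norm_coe_eq_abs_iff 1 one_ne_zero).2 (by simpa using hy)
  rw [nrm x (abs_le.2 ⟨hx.1, hx.2.le⟩)]
  rcases le_total 0 x with h | h
  · have : ((x : ℝ) : AddCircle (1 : ℝ)) + ((1 / 2 : ℝ) : AddCircle (1 : ℝ))
        = ((x - 1 / 2 : ℝ) : AddCircle (1 : ℝ)) := by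
      rw [← AddCircle.coe_add, show x + 1 / 2 = (x - 1 / 2) + 1 by ring, AddCircle.coe_add_period]
    rw [this, nrm _ (abs_le.2 ⟨by linarith, by linarith [hx.2]⟩), abs_of_nonneg h,
      abs_of_nonpos (by linarith [hx.2])]
    ring
  · rw [← AddCircle.coe_add, nrm _ (abs_le.2 ⟨by linarith [hx.1], by linarith⟩), abs_of_nonpos h,
      abs_of_nonneg (by linarith [hx.1])]
    ring

/-- The tent function takes its values uniformly, so the nontrivial exponentials of
`1/2 - 2 ‖u‖` have mean zero. -/
lemma integral_tent (k : ℤ) (hk : k ≠ 0) :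
    ∫ u : AddCircle (1 : ℝ), fourier k ((1 / 2 - ‖u‖ - ‖u‖ : ℝ) : AddCircle (1 : ℝ)) = 0 := by
  have hper := AddCircle.intervalIntegral_preimage (1 : ℝ) (-(1 / 2))
    (fun u => fourier k ((1 / 2 - ‖u‖ - ‖u‖ : ℝ) : AddCircle (1 : ℝ)))
  rw [← hper]
  set c : ℂ := 2 * Real.pi * Complex.I * k * 2 with hc
  have hc0 : c ≠ 0 := by
    simp [hc, Real.pi_ne_zero, hk]
  set A : ℂ := Complex.exp (2 * Real.pi * Complex.I * k * (1 / 2)) with hA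
  have nrm : ∀ y : ℝ, |y| ≤ 1 / 2 → ‖(y : AddCircle (1 : ℝ))‖ = |y| := fun y hy =>
    (AddCircle.norm_coe_eq_abs_iff 1 one_ne_zero).2 (by simpa using hy)
  have e1 : ∀ y ∈ Icc (-(1 / 2) : ℝ) 0,
      fourier k ((1 / 2 - ‖(y : AddCircle (1 : ℝ))‖ - ‖(y : AddCircle (1 : ℝ))‖ : ℝ) :
        AddCircle (1 : ℝ)) = A * Complex.exp (c * y) := by
    intro y hy
    rw [nrm y (abs_le.2 ⟨hy.1, by linarith [hy.2]⟩), abs_of_nonpos hy.2, fourier_coe_apply, hA,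
      ← Complex.exp_add]
    congr 1
    push_cast
    rw [hc]; ring
  have e2 : ∀ y ∈ Icc (0 : ℝ) (1 / 2),
      fourier k ((1 / 2 - ‖(y : AddCircle (1 : ℝ))‖ - ‖(y : AddCircle (1 : ℝ))‖ : ℝ) :
        AddCircle (1 : ℝ)) = A * Complex.exp (-c * y) := by
    intro y hy
    rw [nrm y (abs_le.2 ⟨by linarith [hy.1], hy.2⟩), abs_of_nonneg hy.1, fourier_coe_apply, hA,
      ← Complex.exp_add]
    congr 1
    push_cast
    rw [hc]; ring
  have cont : Continuous fun y : ℝ =>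
      (fourier k ((1 / 2 - ‖(y : AddCircle (1 : ℝ))‖ - ‖(y : AddCircle (1 : ℝ))‖ : ℝ) :
        AddCircle (1 : ℝ)) : ℂ) := by
    have h0 := AddCircle.continuous_mk' (1 : ℝ)
    exact (fourier k).continuous.comp (h0.comp
      ((continuous_const.sub h0.norm).sub h0.norm))
  have ex : Complex.exp (c * ((1 / 2 : ℝ) : ℂ)) = 1 := by
    rw [Complex.exp_eq_one_iff]
    exact ⟨k, by rw [hc]; push_cast; ring⟩
  rw [show (-(1 / 2) : ℝ) + 1 = 1 / 2 by norm_num,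
    ← intervalIntegral.integral_add_adjacent_intervals (b := 0)
      (cont.intervalIntegrable _ _) (cont.intervalIntegrable _ _),
    intervalIntegral.integral_congr (g := fun y : ℝ => A * Complex.exp (c * y))
      (fun y hy => e1 y (by rwa [uIcc_of_le (by norm_num)] at hy)),
    intervalIntegral.integral_congr (g := fun y : ℝ => A * Complex.exp (-c * y))
      (fun y hy => e2 y (by rwa [uIcc_of_le (by norm_num)] at hy)),
    intervalIntegral.integral_const_mul, intervalIntegral.integral_const_mul,
    integral_exp_mul_complex hc0, integral_exp_mul_complex (neg_ne_zero.2 hc0)]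
  have exNegRight : Complex.exp (c * ((-(1 / 2) : ℝ) : ℂ)) = 1 := by
    rw [show c * ((-(1 / 2) : ℝ) : ℂ) = -(c * ((1 / 2 : ℝ) : ℂ)) by push_cast; ring,
      Complex.exp_neg, ex, inv_one]
  have exNegLeft : Complex.exp (-c * ((1 / 2 : ℝ) : ℂ)) = 1 := by
    rw [neg_mul, Complex.exp_neg, ex, inv_one]
  rw [exNegRight, exNegLeft]
  simp

lemma measurePreserving_nsmul_circle (q : ℕ) (hq : 0 < q) :
    MeasurePreserving (fun x : AddCircle (1 : ℝ) => q • x) := by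
  rcases Nat.lt_or_ge 1 q with h | h
  · exact (AddCircle.ergodic_nsmul h).toMeasurePreserving
  · obtain rfl : q = 1 := by omega
    simp only [one_smul]
    exact MeasurePreserving.id _

/-- A half period of the tent wave makes the increment of the tent wave uniformly distributed. -/
lemma integral_tent_increment (q : ℕ) (hq : 0 < q) (t : AddCircle (1 : ℝ))
    (ht : q • t = ((1 / 2 : ℝ) : AddCircle (1 : ℝ))) (k : ℤ) (hk : k ≠ 0) :
    ∫ x : AddCircle (1 : ℝ), fourier k ((‖q • (x + t)‖ : ℝ) : AddCircle (1 : ℝ)) *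
      fourier (-k) ((‖q • x‖ : ℝ) : AddCircle (1 : ℝ)) = 0 := by
  have hcont : Continuous fun u : AddCircle (1 : ℝ) =>
      (fourier k ((1 / 2 - ‖u‖ - ‖u‖ : ℝ) : AddCircle (1 : ℝ)) : ℂ) :=
    (fourier k).continuous.comp ((AddCircle.continuous_mk' (1 : ℝ)).comp (by fun_prop))
  have mp := measurePreserving_nsmul_circle q hq
  rw [← integral_tent k hk, ← mp.map_eq, integral_map mp.measurable.aemeasurable
    hcont.aestronglyMeasurable, mp.map_eq]
  congr 1
  ext x
  rw [smul_add, ht, norm_add_half, show fourier (-k) ((‖q • x‖ : ℝ) : AddCircle (1 : ℝ)) =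
    fourier k (((-‖q • x‖ : ℝ)) : AddCircle (1 : ℝ)) by
      simp [fourier_apply], ← fourier_add_point, ← AddCircle.coe_add]
  rfl

/-- The rotation by `t` conjugated by the shear, `shear q M ∘ rot t ∘ (shear q M)⁻¹`. For
`t = 1 / (2 q)` it decorrelates the characters of frequency small compared to `M`. -/
def mixer (q : ℕ) (M : ℤ) (t : AddCircle (1 : ℝ)) : C(T2, T2) :=
  (((shear q M).symm.trans (rot t)).trans (shear q M) : T2 ≃ₜ T2)

lemma measurePreserving_mixer (q : ℕ) (M : ℤ) (t : AddCircle (1 : ℝ)) :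
    MeasurePreserving (mixer q M t) := by
  have h := measurePreserving_shear q M
  have h' : MeasurePreserving (shear q M).symm := h.symm (shear q M).toMeasurableEquiv
  exact h.comp ((measurePreserving_rot t).comp h')

/-- Correlations of characters under the mixer. Integrating first over the second coordinate kills
everything but `a = c`, `b = d`; the tent wave then takes care of the remaining case. -/
lemma corr_mixer (q : ℕ) (hq : 0 < q) (t : AddCircle (1 : ℝ))
    (ht : q • t = ((1 / 2 : ℝ) : AddCircle (1 : ℝ))) (a b c d M : ℤ)
    (hM : |b| + |d| < M) :
    ∫ z, ch a b (mixer q M t z) * (starRingEnd ℂ) (ch c d z) =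
      if a = 0 ∧ b = 0 ∧ c = 0 ∧ d = 0 then 1 else 0 := by
  have hmp := measurePreserving_shear q M
  rw [← hmp.integral_comp (shear q M).measurableEmbedding]
  have hcorr : ∀ z : T2, ch a b (mixer q M t (shear q M z)) * (starRingEnd ℂ) (ch c d (shear q M z))
      = (fourier a t * fourier (a - c) z.1 *
          (fourier (a * M + b) ((‖q • (z.1 + t)‖ : ℝ) : AddCircle (1 : ℝ)) *
          fourier (-(c * M + d)) ((‖q • z.1‖ : ℝ) : AddCircle (1 : ℝ)))) *
        fourier ((a - c) * M + (b - d)) z.2 := by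
    intro z
    have : mixer q M t (shear q M z) = shear q M (rot t z) := by
      simp [mixer]
    rw [this]
    simp only [shear_apply, rot_apply, ch_apply, map_mul, ← fourier_neg, fourier_add_point,
      fourier_zsmul_point]
    rw [show (a - c) * M + (b - d) = a * M + (-c * M + (b + -d)) by ring,
      show -(c * M + d) = -c * M + -d by ring, sub_eq_add_neg a c]
    simp only [fourier_add]
    ring_nf
  simp only [hcorr]
  rw [Measure.volume_eq_prod, integral_prod_mul (fun x : AddCircle (1 : ℝ) =>
      fourier a t * fourier (a - c) x *
        (fourier (a * M + b) ((‖q • (x + t)‖ : ℝ) : AddCircle (1 : ℝ)) *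
          fourier (-(c * M + d)) ((‖q • x‖ : ℝ) : AddCircle (1 : ℝ))))
      (fun y => fourier ((a - c) * M + (b - d)) y), integral_fourier_eq]
  have hMpos : 0 < M := lt_of_le_of_lt (by positivity) hM
  -- a multiple of `M` smaller than `M` in absolute value vanishes
  have small : ∀ u v : ℤ, |v| < M → u * M + v = 0 → u = 0 ∧ v = 0 := by
    intro u v hv h
    have hdvd : M ∣ v := ⟨-u, by linarith⟩
    have hv0 : v = 0 := Int.eq_zero_of_abs_lt_dvd hdvd hv
    subst hv0
    have : u * M = 0 := by linarith
    exact ⟨(mul_eq_zero.1 this).resolve_right hMpos.ne', rfl⟩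
  by_cases h0 : (a - c) * M + (b - d) = 0
  · obtain ⟨h1, h2⟩ := small _ _ ((abs_sub b d).trans_lt hM) h0
    obtain rfl : a = c := by linarith
    obtain rfl : b = d := by linarith
    simp only [sub_self, zero_mul, add_zero, if_true, mul_one, fourier_zero]
    rw [integral_const_mul]
    by_cases hab : a * M + b = 0
    · obtain ⟨rfl, rfl⟩ := small _ _ (by linarith [abs_nonneg b]) hab
      simp
    · rw [integral_tent_increment q hq t ht _ hab, mul_zero, if_neg]
      rintro ⟨rfl, rfl, -, -⟩
      simp at hab
  · rw [if_neg h0, mul_zero, if_neg]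
    rintro ⟨rfl, rfl, rfl, rfl⟩
    simp at h0

/-! ### The space of limits of conjugated rotations -/

/-- The rotation by `α` conjugated by `H`. -/
def conjC (H : T2 ≃ₜ T2) (α : AddCircle (1 : ℝ)) : C(T2, T2) :=
  ((H.symm.trans (rot α)).trans H : T2 ≃ₜ T2)

lemma conjC_apply (H : T2 ≃ₜ T2) (α : AddCircle (1 : ℝ)) (z : T2) :
    conjC H α z = H (rot α (H.symm z)) := rfl

lemma rot_rot (α β : AddCircle (1 : ℝ)) (z : T2) : rot α (rot β z) = rot (β + α) z := by
  simp [rot_apply, add_assoc]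

lemma continuous_conjC (H : T2 ≃ₜ T2) : Continuous (conjC H) := by
  refine ContinuousMap.continuous_of_continuous_uncurry _ ?_
  change Continuous fun p : AddCircle (1 : ℝ) × T2 => H (rot p.1 (H.symm p.2))
  simp only [rot_apply]
  fun_prop

/-- The iterates of a continuous self-map, as continuous maps. -/
def iterC : ℕ → C(T2, T2) → C(T2, T2)
  | 0, _ => ContinuousMap.id T2
  | n + 1, U => (iterC n U).comp U

lemma coe_iterC (n : ℕ) (U : C(T2, T2)) : ⇑(iterC n U) = U^[n] := by
  induction n with
  | zero => rfl
  | succ n ih => rw [iterC, ContinuousMap.coe_comp, ih, Function.iterate_succ]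

lemma continuous_iterC (n : ℕ) : Continuous (iterC n) := by
  induction n with
  | zero => exact continuous_const
  | succ n ih => exact ih.compCM continuous_id

lemma iterC_conjC (n : ℕ) (H : T2 ≃ₜ T2) (α : AddCircle (1 : ℝ)) :
    iterC n (conjC H α) = conjC H (n • α) := by
  induction n with
  | zero =>
    ext1 z
    simp [iterC, conjC_apply, rot_apply]
  | succ n ih =>
    ext1 z
    rw [iterC, ih, ContinuousMap.comp_apply, conjC_apply, conjC_apply, conjC_apply,
      H.symm_apply_apply, rot_rot, succ_nsmul']

/-- Periodic rotations conjugated by measure-preserving homeomorphisms, paired with their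
inverses. -/
def orb : Set (C(T2, T2) × C(T2, T2)) :=
  {p | ∃ H : T2 ≃ₜ T2, MeasurePreserving H ∧ ∃ q : ℕ, 0 < q ∧ ∃ α : AddCircle (1 : ℝ),
    q • α = 0 ∧ p = (conjC H α, conjC H (-α))}

/-- Maps returning uniformly close to the identity at some time `≥ N`. -/
def rigidSet (N : ℕ) : Set (C(T2, T2) × C(T2, T2)) :=
  {p | ∃ n, N ≤ n ∧ dist (iterC n p.1) (ContinuousMap.id T2) < 1 / (N + 1)}

/-- The correlation of two characters under `W`, minus its value for independent characters. -/
def corrDefect (W : C(T2, T2)) (s : (ℤ × ℤ) × (ℤ × ℤ)) : ℂ :=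
  (∫ z, ch s.1.1 s.1.2 (W z) * (starRingEnd ℂ) (ch s.2.1 s.2.2 z)) -
    if s.1.1 = 0 ∧ s.1.2 = 0 ∧ s.2.1 = 0 ∧ s.2.2 = 0 then 1 else 0

/-- The pairs of characters with frequencies bounded by `N`. -/
def freqBox (N : ℕ) : Finset ((ℤ × ℤ) × (ℤ × ℤ)) :=
  (Finset.Icc (-N : ℤ) N ×ˢ Finset.Icc (-N : ℤ) N) ×ˢ
    (Finset.Icc (-N : ℤ) N ×ˢ Finset.Icc (-N : ℤ) N)

/-- Maps which at some time nearly decorrelate all characters of frequency at most `N`. -/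
def mixSet (N : ℕ) : Set (C(T2, T2) × C(T2, T2)) :=
  {p | ∃ n, ∀ s ∈ freqBox N, ‖corrDefect (iterC n p.1) s‖ < 1 / (N + 1)}

lemma continuous_integral_C : Continuous fun F : C(T2, ℂ) => ∫ z, F z := by
  have h : (fun F : C(T2, ℂ) => ∫ z, F z) = fun F => inner ℂ (toL2 1) (toL2 F) := by
    funext F
    rw [inner_toL2]
    simp
  rw [h]
  exact continuous_const.inner toL2.continuous

lemma continuous_corrDefect (s : (ℤ × ℤ) × (ℤ × ℤ)) : Continuous fun W => corrDefect W s := by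
  refine Continuous.sub ?_ continuous_const
  have h : Continuous fun W : C(T2, T2) => (ch s.1.1 s.1.2).comp W * star (ch s.2.1 s.2.2) :=
    (ContinuousMap.continuous_postcomp _).mul continuous_const
  exact continuous_integral_C.comp h

lemma isOpen_rigidSet (N : ℕ) : IsOpen (rigidSet N) := by
  have : rigidSet N = ⋃ n ∈ Ici N, {p : C(T2, T2) × C(T2, T2) |
      dist (iterC n p.1) (ContinuousMap.id T2) < 1 / (N + 1)} := by
    ext p
    simp [rigidSet]
  rw [this]
  refine isOpen_biUnion fun n _ => isOpen_lt ?_ continuous_const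
  exact ((continuous_iterC n).comp continuous_fst).dist continuous_const

lemma isOpen_mixSet (N : ℕ) : IsOpen (mixSet N) := by
  have : mixSet N = ⋃ n, ⋂ s ∈ freqBox N, {p : C(T2, T2) × C(T2, T2) |
      ‖corrDefect (iterC n p.1) s‖ < 1 / (N + 1)} := by
    ext p
    simp [mixSet]
  rw [this]
  refine isOpen_iUnion fun n => isOpen_biInter_finset fun s _ => isOpen_lt ?_ continuous_const
  exact ((continuous_corrDefect s).comp ((continuous_iterC n).comp continuous_fst)).norm

/-- The maps in `orb` are periodic. -/
lemma orb_subset_rigidSet (N : ℕ) : orb ⊆ rigidSet N := by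
  rintro - ⟨H, -, q, hq, α, hα, rfl⟩
  refine ⟨N * q, Nat.le_mul_of_pos_right N hq, ?_⟩
  have : iterC (N * q) (conjC H α) = ContinuousMap.id T2 := by
    rw [iterC_conjC, mul_smul, hα, smul_zero]
    ext1 z
    simp [conjC_apply, rot_apply]
  rw [this, dist_self]
  positivity

/-- As the shear parameter tends to infinity, the mixers decorrelate arbitrary `L²` functions. -/
lemma tendsto_mixer (q : ℕ) (hq : 0 < q) (t : AddCircle (1 : ℝ))
    (ht : q • t = ((1 / 2 : ℝ) : AddCircle (1 : ℝ))) (f g : L2T) :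
    Tendsto (fun k : ℕ => inner ℂ g (koop (mixer q k t) (measurePreserving_mixer q k t) f)) atTop
      (nhds (inner ℂ g (toL2 1) * inner ℂ (toL2 1) f)) := by
  refine tendsto_koop_of_ch (fun k : ℕ => mixer q k t) (fun k => measurePreserving_mixer q k t) ?_
    f g
  intro a b c d
  refine tendsto_const_nhds.congr' ?_
  filter_upwards [eventually_gt_atTop (|b| + |d|).toNat] with k hk
  exact (corr_mixer q hq t ht a b c d k (by omega)).symm

/-- The mixing condition is dense. Given `H ∘ rot α ∘ H⁻¹` with `q α = 0`, the shear commutes with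
`rot α`, so `H` may be replaced by `H ∘ shear q M` without changing the map; then `α` is perturbed
to a nearby torsion angle `β` one of whose multiples is `1 / (2 q)`, so that the corresponding
iterate is a conjugate of the mixer. -/
lemma orb_subset_closure_mixSet (N : ℕ) : orb ⊆ closure (orb ∩ mixSet N) := by
  rintro - ⟨H, hH, q, hq, α, hα, rfl⟩
  have hq' : (0 : ℝ) < q := by exact_mod_cast hq
  set t : AddCircle (1 : ℝ) := ((1 / (2 * q) : ℝ) : AddCircle (1 : ℝ)) with htdef
  have ht : q • t = ((1 / 2 : ℝ) : AddCircle (1 : ℝ)) := by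
    rw [htdef, ← AddCircle.coe_nsmul, nsmul_eq_mul]
    congr 1
    field_simp
  have hH' : MeasurePreserving H.symm := hH.symm H.toMeasurableEquiv
  -- the shear parameter `M`: conjugated by `H`, the mixer nearly decorrelates the given characters
  obtain ⟨M, hM⟩ : ∃ M : ℕ, ∀ s ∈ freqBox N,
      ‖corrDefect (conjC ((shear q M).trans H) t) s‖ < 1 / (N + 1) := by
    have : ∀ᶠ M : ℕ in atTop, ∀ s ∈ freqBox N,
        ‖corrDefect (conjC ((shear q M).trans H) t) s‖ < 1 / (N + 1) := by
      rw [Filter.eventually_all_finset]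
      rintro ⟨⟨a, b⟩, ⟨c, d⟩⟩ -
      set F : C(T2, ℂ) := (ch a b).comp H with hF
      set G : C(T2, ℂ) := (ch c d).comp H with hG
      have hcorr : ∀ a b : ℤ, ∫ z, ch a b (H z) = if a = 0 ∧ b = 0 then 1 else 0 := by
        intro a b
        rw [hH.integral_comp H.measurableEmbedding (fun z => ch a b z), integral_ch]
      have e1 : inner ℂ (toL2 G) (toL2 1) = if c = 0 ∧ d = 0 then (1 : ℂ) else 0 := by
        rw [inner_toL2]
        simp only [ContinuousMap.one_apply, one_mul, hG, ContinuousMap.comp_apply]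
        rw [integral_conj]
        erw [hcorr]
        split_ifs <;> simp
      have e2 : inner ℂ (toL2 1) (toL2 F) = if a = 0 ∧ b = 0 then (1 : ℂ) else 0 := by
        rw [inner_toL2]
        simp only [ContinuousMap.one_apply, map_one, mul_one, hF, ContinuousMap.comp_apply]
        exact hcorr a b
      have lim := tendsto_mixer q hq t ht (toL2 F) (toL2 G)
      have e3 : ∀ M : ℕ, corrDefect (conjC ((shear q M).trans H) t) ((a, b), (c, d)) =
          inner ℂ (toL2 G) (koop (mixer q M t) (measurePreserving_mixer q M t) (toL2 F)) -
            inner ℂ (toL2 G) (toL2 1) * inner ℂ (toL2 1) (toL2 F) := by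
        intro M
        rw [corrDefect, e1, e2, inner_koop_toL2]
        congr 1
        · rw [← hH.integral_comp H.measurableEmbedding]
          congr 1
          ext z
          simp [hF, hG, conjC_apply, mixer]
        · split_ifs <;> simp_all
      have lim0 : Tendsto (fun M : ℕ =>
          ‖corrDefect (conjC ((shear q M).trans H) t) ((a, b), (c, d))‖) atTop (nhds 0) := by
        simp only [e3]
        have := (lim.sub_const (inner ℂ (toL2 G) (toL2 1) * inner ℂ (toL2 1) (toL2 F))).norm
        simpa using this
      exact lim0.eventually_lt_const (by positivity)
    exact this.exists
  set H₁ : T2 ≃ₜ T2 := (shear q M).trans H with hH₁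
  -- the angles `α + 1 / (2 q² (j + 1))` tend to `α`, and `q (j + 1)` times such an angle is `t`
  set β : ℕ → AddCircle (1 : ℝ) := fun j =>
    α + ((1 / (2 * q * (q * (j + 1))) : ℝ) : AddCircle (1 : ℝ)) with hβ
  have hβt : ∀ j, (q * (j + 1)) • β j = t := by
    intro j
    rw [hβ]
    simp only [smul_add]
    rw [mul_comm q (j + 1), mul_smul (j + 1) q α, hα, smul_zero, zero_add, ← AddCircle.coe_nsmul,
      nsmul_eq_mul, htdef]
    congr 1
    push_cast
    field_simp
  have hβlim : Tendsto β atTop (nhds α) := by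
    have h1 : Tendsto (fun j : ℕ => (1 / (2 * q * (q * (j + 1))) : ℝ)) atTop (nhds 0) := by
      have h := (tendsto_one_div_add_atTop_nhds_zero_nat (𝕜 := ℝ)).const_mul (1 / (2 * q * q) : ℝ)
      rw [mul_zero] at h
      refine h.congr fun j => ?_
      field_simp
    have h2 := ((AddCircle.continuous_mk' (1 : ℝ)).tendsto 0).comp h1
    have h3 := h2.const_add α
    simpa [hβ, Function.comp_def] using h3
  have hconj : ∀ γ : AddCircle (1 : ℝ), q • γ = 0 → conjC H₁ γ = conjC H γ := by
    intro γ hγ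
    ext1 z
    rw [conjC_apply, conjC_apply]
    change H (shear q M (rot γ ((shear q M).symm (H.symm z)))) = _
    rw [shear_rot_comm q M γ hγ, Homeomorph.apply_symm_apply]
  have hlim : Tendsto (fun j => (conjC H₁ (β j), conjC H₁ (-β j))) atTop
      (nhds (conjC H α, conjC H (-α))) := by
    rw [← hconj α hα, ← hconj (-α) (by rw [smul_neg, hα, neg_zero])]
    exact (((continuous_conjC H₁).tendsto α).comp hβlim).prodMk_nhds
      (((continuous_conjC H₁).tendsto (-α)).comp hβlim.neg)
  refine mem_closure_of_tendsto hlim (Eventually.of_forall fun j => ⟨?_, ?_⟩)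
  · refine ⟨H₁, hH.comp (measurePreserving_shear q M), 2 * q * (q * (j + 1)), by positivity, β j, ?_,
      rfl⟩
    rw [mul_smul, hβt, mul_smul, ht, ← AddCircle.coe_nsmul, nsmul_eq_mul]
    norm_num
  · exact ⟨q * (j + 1), fun s hs => by rw [iterC_conjC, hβt]; exact hM s hs⟩

lemma measurePreserving_of_mem_closure {p : C(T2, T2) × C(T2, T2)} (hp : p ∈ closure orb) :
    MeasurePreserving p.1 := by
  have hcl : IsClosed {p : C(T2, T2) × C(T2, T2) |
      ∀ F : C(T2, ℂ), ∫ z, F (p.1 z) = ∫ z, F z} := by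
    simp only [ofPred_forall]
    refine isClosed_iInter fun F => isClosed_eq ?_ continuous_const
    exact continuous_integral_C.comp
      ((ContinuousMap.continuous_postcomp F).comp continuous_fst)
  have hsub : orb ⊆ {p | ∀ F : C(T2, ℂ), ∫ z, F (p.1 z) = ∫ z, F z} := by
    rintro - ⟨H, hH, q, hq, α, hα, rfl⟩ F
    have hmp : MeasurePreserving ((H.symm.trans (rot α)).trans H) :=
      hH.comp ((measurePreserving_rot α).comp (hH.symm H.toMeasurableEquiv))
    exact hmp.integral_comp (Homeomorph.measurableEmbedding _) (fun z => F z)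
  have h := closure_minimal hsub hcl hp
  refine ⟨p.1.continuous.measurable, ?_⟩
  have : IsProbabilityMeasure (Measure.map p.1 (volume : Measure T2)) :=
    Measure.isProbabilityMeasure_map p.1.continuous.measurable.aemeasurable
  refine ext_of_forall_integral_eq_of_IsFiniteMeasure fun f => ?_
  rw [integral_map p.1.continuous.measurable.aemeasurable f.continuous.aestronglyMeasurable]
  have := h ⟨fun z => (f z : ℂ), by fun_prop⟩
  simp only [ContinuousMap.coe_mk] at this
  rw [integral_complex_ofReal, integral_complex_ofReal] at this
  exact_mod_cast this

lemma inverse_of_mem_closure {p : C(T2, T2) × C(T2, T2)} (hp : p ∈ closure orb) :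
    (∀ z, p.2 (p.1 z) = z) ∧ ∀ z, p.1 (p.2 z) = z := by
  have hcl : IsClosed {p : C(T2, T2) × C(T2, T2) |
      p.2.comp p.1 = ContinuousMap.id T2 ∧ p.1.comp p.2 = ContinuousMap.id T2} :=
    (isClosed_eq (continuous_snd.compCM continuous_fst) continuous_const).inter
      (isClosed_eq (continuous_fst.compCM continuous_snd) continuous_const)
  have hsub : orb ⊆ {p | p.2.comp p.1 = ContinuousMap.id T2 ∧
      p.1.comp p.2 = ContinuousMap.id T2} := by
    rintro - ⟨H, hH, q, hq, α, hα, rfl⟩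
    constructor <;> ext1 z <;> simp [conjC_apply, rot_apply]
  have h := closure_minimal hsub hcl hp
  exact ⟨fun z => DFunLike.congr_fun h.1 z, fun z => DFunLike.congr_fun h.2 z⟩

/-- Baire category: some limit of conjugated rotations is both rigid and mixing along a
sequence. -/
lemma exists_generic : ∃ p ∈ closure orb, ∀ N, p ∈ rigidSet N ∧ p ∈ mixSet N := by
  have : CompleteSpace (closure orb) := isClosed_closure.completeSpace_coe
  have hne : Nonempty (closure orb) := ⟨⟨_, subset_closure ⟨Homeomorph.refl T2,
    MeasurePreserving.id _, 1, one_pos, 0, by simp, rfl⟩⟩⟩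
  have hd : Dense (⋂ N, ((↑) ⁻¹' (rigidSet N ∩ mixSet N) : Set (closure orb))) := by
    refine dense_iInter_of_isOpen_nat (fun N => ?_) fun N => ?_
    · exact ((isOpen_rigidSet N).inter (isOpen_mixSet N)).preimage continuous_subtype_val
    · rw [Subtype.dense_iff]
      refine closure_minimal ((orb_subset_closure_mixSet N).trans (closure_mono ?_))
        isClosed_closure
      intro p hp
      exact ⟨⟨p, subset_closure hp.1⟩, ⟨orb_subset_rigidSet N hp.1, hp.2⟩, rfl⟩
  obtain ⟨p, hp⟩ := hd.nonempty
  exact ⟨p, p.2, fun N => mem_iInter.1 hp N⟩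

/-! ### Weak mixing and failure of strong mixing -/

/-- A map in all the sets `mixSet N` is weakly mixing. -/
lemma weakMixing_of_mixSet (U : C(T2, T2)) (hU : MeasurePreserving U)
    (h : ∀ N : ℕ, ∃ n, ∀ s ∈ freqBox N, ‖corrDefect (iterC n U) s‖ < 1 / (N + 1))
    {A B : Set T2} (hA : MeasurableSet A) (hB : MeasurableSet B) :
    Tendsto (fun n : ℕ => (1 / n : ℝ) * ∑ j ∈ Finset.range n,
      ((volume (U^[j] ⁻¹' A ∩ B)).toReal - (volume A).toReal * (volume B).toReal) ^ 2)
      atTop (nhds 0) := by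
  choose n hn using h
  have hmp : ∀ j, MeasurePreserving (iterC j U) := fun j => by
    rw [coe_iterC]; exact hU.iterate j
  have lim : ∀ f g : L2T, Tendsto (fun k => inner ℂ g (koop (iterC (n k) U) (hmp _) f)) atTop
      (nhds (inner ℂ g (toL2 1) * inner ℂ (toL2 1) f)) := by
    refine tendsto_koop_of_ch (fun k => iterC (n k) U) (fun k => hmp _) fun a b c d => ?_
    rw [tendsto_iff_norm_sub_tendsto_zero]
    refine squeeze_zero' (Eventually.of_forall fun k => norm_nonneg _) ?_
      (tendsto_one_div_add_atTop_nhds_zero_nat (𝕜 := ℝ))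
    filter_upwards [eventually_ge_atTop (|a| + |b| + |c| + |d|).toNat] with k hk
    refine (hn k ((a, b), (c, d)) ?_).le
    simp only [freqBox, Finset.mem_product, Finset.mem_Icc]
    have ha := abs_le.1 (le_refl |a|)
    have hb := abs_le.1 (le_refl |b|)
    have hc := abs_le.1 (le_refl |c|)
    have hd := abs_le.1 (le_refl |d|)
    omega
  -- the centred indicator of `A` and its orbit under the Koopman operator
  set iA : L2T := indicatorConstLp 2 hA (measure_ne_top _ _) (1 : ℂ) with hiA
  set iB : L2T := indicatorConstLp 2 hB (measure_ne_top _ _) (1 : ℂ) with hiB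
  have hone : toL2 1 = indicatorConstLp 2 MeasurableSet.univ (measure_ne_top volume univ) (1 : ℂ) := by
    apply Lp.ext
    refine (ContinuousMap.coeFn_toLp (volume : Measure T2) 1).trans ?_
    refine EventuallyEq.trans ?_ indicatorConstLp_coeFn.symm
    exact ae_of_all _ fun z => by simp
  have hinner : ∀ {s t : Set T2} (hs : MeasurableSet s) (ht : MeasurableSet t),
      inner ℂ (indicatorConstLp 2 hs (measure_ne_top volume s) (1 : ℂ))
        (indicatorConstLp 2 ht (measure_ne_top volume t) (1 : ℂ)) =
        ((volume (s ∩ t)).toReal : ℂ) := by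
    intro s t hs ht
    rw [L2.inner_indicatorConstLp_indicatorConstLp]
    simp [Measure.real]
  set f : L2T := iA - ((volume A).toReal : ℂ) • toL2 1 with hf
  set v : ℕ → L2T := fun j => koop (iterC j U) (hmp j) f with hv
  have hstat : ∀ j m l, inner ℂ (v (j + m)) (v (j + l)) = inner ℂ (v m) (v l) := by
    have hcomp : ∀ j m, v (j + m) = koop (iterC j U) (hmp j) (v m) := by
      intro j m
      have h := Lp.compMeasurePreserving_comp_apply (E := ℂ) (p := 2) f (hmp m) (hmp j)
      have e : (iterC (j + m) U : T2 → T2) = iterC m U ∘ iterC j U := by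
        rw [coe_iterC, coe_iterC, coe_iterC, add_comm, Function.iterate_add]
      have transport : ∀ {W W' : T2 → T2} (hW : MeasurePreserving W) (hW' : MeasurePreserving W'),
          W = W' → koop W hW f = koop W' hW' f := by
        rintro W _ hW hW' rfl
        rfl
      exact (transport (hmp (j + m)) ((hmp m).comp (hmp j)) e).trans h
    intro j m l
    rw [hcomp, hcomp, LinearIsometry.inner_map_map]
  have hone1 : inner ℂ (toL2 1) (toL2 1) = (1 : ℂ) := by
    rw [hone, hinner]; simp
  have hfe : inner ℂ (toL2 1) f = 0 := by
    rw [hf, inner_sub_right, inner_smul_right, hone1, hone, hiA, hinner]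
    simp
  have key := tendsto_cesaro_of_subseq v hstat n (fun g => by
    have := lim f g
    rw [hfe, mul_zero] at this
    exact this) iB
  refine key.congr fun N => ?_
  congr 1
  refine Finset.sum_congr rfl fun j _ => ?_
  have hk1 : koop (iterC j U) (hmp j) (toL2 1) = toL2 1 := by
    rw [koop_toL2]
    rfl
  have hkA : koop (iterC j U) (hmp j) iA = indicatorConstLp 2 ((hmp j).measurable hA)
      (measure_ne_top volume _) (1 : ℂ) := by
    exact Lp.indicatorConstLp_compMeasurePreserving hA (measure_ne_top _ _) (1 : ℂ) (hmp j)
  have e : inner ℂ (v j) iB = (((volume (U^[j] ⁻¹' A ∩ B)).toReal -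
      (volume A).toReal * (volume B).toReal : ℝ) : ℂ) := by
    simp only [hv, hf, map_sub, map_smul, hk1, hkA, inner_sub_left, inner_smul_left]
    rw [hone, hiB, hinner, hinner, coe_iterC]
    simp
  rw [e, Complex.norm_real, Real.norm_eq_abs, sq_abs]

/-- A map returning uniformly close to the identity at arbitrarily large times is not strongly
mixing: it keeps two distant balls apart at those times. -/
lemma not_strongMixing_of_rigidSet (U : C(T2, T2))
    (h : ∀ N : ℕ, ∃ n, N ≤ n ∧ dist (iterC n U) (ContinuousMap.id T2) < 1 / (N + 1)) :
    ∃ A B : Set T2, MeasurableSet A ∧ MeasurableSet B ∧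
      ¬ Tendsto (fun n : ℕ => volume (U^[n] ⁻¹' A ∩ B)) atTop
        (nhds (volume A * volume B)) := by
  set P : T2 := (((1 / 2 : ℝ) : AddCircle (1 : ℝ)), 0) with hP
  have hdist : 1 / 2 ≤ dist (0 : T2) P := by
    have : dist (0 : AddCircle (1 : ℝ)) ((1 / 2 : ℝ) : AddCircle (1 : ℝ)) = 1 / 2 := by
      rw [dist_zero_left, AddCircle.norm_half_period_eq]
      simp
    calc (1 / 2 : ℝ) = dist (0 : AddCircle (1 : ℝ)) ((1 / 2 : ℝ) : AddCircle (1 : ℝ)) := this.symm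
      _ ≤ dist (0 : T2) P := le_max_left _ _
  refine ⟨Metric.ball 0 (1 / 8), Metric.ball P (1 / 8), measurableSet_ball, measurableSet_ball,
    fun hlim => ?_⟩
  have hpos : 0 < volume (Metric.ball (0 : T2) (1 / 8)) * volume (Metric.ball P (1 / 8)) :=
    ENNReal.mul_pos (Metric.measure_ball_pos _ _ (by norm_num)).ne'
      (Metric.measure_ball_pos _ _ (by norm_num)).ne'
  obtain ⟨N₀, hN₀⟩ := eventually_atTop.1 (hlim.eventually_const_lt hpos)
  obtain ⟨n, hn, hd⟩ := h (N₀ + 4)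
  have hpos' := hN₀ n (by omega)
  obtain ⟨z, hz1, hz2⟩ := nonempty_of_measure_ne_zero hpos'.ne'
  have hz : dist (U^[n] z) z < 1 / 4 := by
    have h1 := ContinuousMap.dist_apply_le_dist (f := iterC n U) (g := ContinuousMap.id T2) z
    rw [coe_iterC, ContinuousMap.id_apply] at h1
    have h2 : (1 : ℝ) / ((N₀ + 4 : ℕ) + 1) ≤ 1 / 4 := by
      apply one_div_le_one_div_of_le (by norm_num)
      push_cast
      linarith [(Nat.cast_nonneg N₀ : (0 : ℝ) ≤ N₀)]
    linarith
  rw [mem_preimage, Metric.mem_ball] at hz1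
  rw [Metric.mem_ball] at hz2
  have := dist_triangle4 (0 : T2) (U^[n] z) z P
  rw [dist_comm] at hz1
  linarith

/-- There exists an automorphism of the torus which is weakly mixing but not strongly
mixing. -/
theorem exists_weakly_mixing_not_strongly_mixing_torus :
    ∃ U : T2 → T2, IsAutomorphism U ∧
      (∀ A B : Set T2, MeasurableSet A → MeasurableSet B →
        Tendsto
          (fun n : ℕ => (1 / n : ℝ) *
            ∑ j ∈ Finset.range n,
              ((volume (U^[j] ⁻¹' A ∩ B)).toReal -
                (volume A).toReal * (volume B).toReal) ^ 2)
          atTop (nhds 0)) ∧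
      (∃ A B : Set T2, MeasurableSet A ∧ MeasurableSet B ∧
        ¬ Tendsto (fun n : ℕ => volume (U^[n] ⁻¹' A ∩ B)) atTop
            (nhds (volume A * volume B))) := by
  obtain ⟨⟨U, V⟩, hp, hgen⟩ := exists_generic
  have hmp : MeasurePreserving U := measurePreserving_of_mem_closure hp
  obtain ⟨hVU, hUV⟩ := inverse_of_mem_closure hp
  refine ⟨U, ⟨U.continuous.measurable, V, V.continuous.measurable, ae_of_all _ hVU,
    ae_of_all _ hUV, fun A hA => hmp.measure_preimage hA.nullMeasurableSet⟩, ?_, ?_⟩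
  · exact fun A B hA hB => weakMixing_of_mixSet U hmp (fun N => (hgen N).2) hA hB
  · exact not_strongMixing_of_rigidSet U fun N => (hgen N).1

end
end
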